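/- arXiv:2410.18885 — 3 statements merged into one kernel-verified Lean document; each statement's English description precedes it below -/
import Mathlib

section
/- Let G = (V,E) be a finite simple graph, let φ > 0 be a real number, and let X ⊆ V be a nonempty set that is φ-vertex-expanding in G. Then there exists a Steiner tree spanning X in G whose maximum degree is at most 6/φ + 3. -/
/-- `X` is `φ`-vertex-expanding in the subgraph of `G` induced on the ground
set `A`: for every vertex cut `(L, S, R)` of `G[A]`,
`|S| ≥ φ · min{|X ∩ (L∪S)|, |X ∩ (R∪S)|}`. -/
def IsVertexExpandingOn {V : Type*} (G : SimpleGraph V) (A X : Set V) (φ : ℝ) : Prop :=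
  ∀ L S R : Set V, L ∪ S ∪ R = A →
    Disjoint L S → Disjoint L R → Disjoint S R →
    L.Nonempty → R.Nonempty →
    (∀ u ∈ L, ∀ v ∈ R, ¬ G.Adj u v) →
    φ * min ((X ∩ (L ∪ S)).ncard : ℝ) ((X ∩ (R ∪ S)).ncard : ℝ) ≤ (S.ncard : ℝ)


namespace StLow

open SimpleGraph

set_option linter.unusedSectionVars false

variable {V : Type} [Fintype V]

/-- degree as an `ncard` -/
noncomputable def dg (T : SimpleGraph V) (v : V) : ℕ := (T.neighborSet v).ncard

/-- restriction of `T` to edges inside `C` -/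
def restr (T : SimpleGraph V) (C : Set V) : SimpleGraph V where
  Adj a b := T.Adj a b ∧ a ∈ C ∧ b ∈ C
  symm := ⟨fun _ _ h => ⟨h.1.symm, h.2.2, h.2.1⟩⟩
  loopless := ⟨fun _ h => h.1.ne rfl⟩

lemma restr_mono (T : SimpleGraph V) {C D : Set V} (h : C ⊆ D) : restr T C ≤ restr T D :=
  fun _ _ ⟨h1, h2, h3⟩ => ⟨h1, h h2, h h3⟩

lemma restr_le (T : SimpleGraph V) (C : Set V) : restr T C ≤ T := fun _ _ h => h.1

lemma dg_mono {T T' : SimpleGraph V} {v : V} (h : ∀ b, T.Adj v b → T'.Adj v b) :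
    dg T v ≤ dg T' v :=
  Set.ncard_le_ncard (fun b hb => h b hb) (Set.toFinite _)

lemma reach_of_edges {T T' : SimpleGraph V} (h : ∀ a b, T.Adj a b → T'.Reachable a b)
    {a b : V} (hab : T.Reachable a b) : T'.Reachable a b := by
  obtain ⟨w⟩ := hab
  induction w with
  | nil => exact Reachable.refl _
  | cons h1 _ ih => exact (h _ _ h1).trans ih

lemma reach_of_walk {T T' : SimpleGraph V} (S : Set V)
    (h : ∀ a b, a ∈ S → b ∈ S → T.Adj a b → T'.Reachable a b)
    {a b : V} (w : T.Walk a b) (hw : ∀ v ∈ w.support, v ∈ S) : T'.Reachable a b := by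
  induction w with
  | nil => exact Reachable.refl _
  | cons h1 q ih =>
    refine (h _ _ (hw _ (by simp)) (hw _ (by simp)) h1).trans (ih ?_)
    intro v hv
    exact hw v (by simp [hv])

lemma walk_split {T : SimpleGraph V} {a b : V} (P : T.Walk a b) (u : V) (hu : u ∈ P.support)
    (hne : u ≠ a) : ∃ (u' : V) (q1 : T.Walk a u') (q2 : T.Walk u b), T.Adj u' u ∧
      P.support = q1.support ++ q2.support := by
  induction P with
  | nil => simp at hu; exact absurd hu hne
  | @cons a c b h1 q ih =>
    by_cases huc : u = c
    · subst huc
      exact ⟨a, Walk.nil, q, h1, by simp⟩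
    · have : u ∈ q.support := by
        simp at hu
        rcases hu with h | h
        · exact absurd h hne
        · exact h
      obtain ⟨u', q1, q2, h2, h3⟩ := ih this huc
      exact ⟨u', Walk.cons h1 q1, q2, h2, by simp [h3]⟩

structure Good (G T : SimpleGraph V) (K : Set V) (k : ℕ) (C : Set V) : Prop where
  ne : ∃ c ∈ C, c ∈ K
  conn : ∀ a ∈ C, a ∈ K → ∀ b ∈ C, b ∈ K → (restr T C).Reachable a b
  deg : ∀ v ∈ C, dg T v ≤ k
  free : ∀ u ∈ C, ∃ T' ≤ G, (∀ a b, ¬ (a ∈ C ∧ b ∈ C) → (T'.Adj a b ↔ T.Adj a b)) ∧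
    (∀ v ∈ C, v ∈ K → (restr T' C).Reachable u v) ∧ (∀ v ∈ C, dg T' v ≤ k) ∧ dg T' u < k

structure Valid (G T : SimpleGraph V) (K : Set V) (k : ℕ) (r : V → V → Prop) : Prop where
  symm : ∀ a b, r a b → r b a
  trans : ∀ a b c, r a b → r b c → r a c
  good : ∀ v, r v v → Good G T K k {u | r v u}
  low : ∀ v ∈ K, dg T v < k → r v v

lemma good_union {G T : SimpleGraph V} {K : Set V} {k : ℕ} {r : V → V → Prop}
    (hr : Valid G T K k r) (hTK : ∀ a b, T.Adj a b → a ∈ K) (U : Set V)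
    (hsat : ∀ v ∈ U, ∀ w, r v w → w ∈ U)
    (hne : ∃ c ∈ U, c ∈ K)
    (hconn : ∀ a ∈ U, a ∈ K → ∀ b ∈ U, b ∈ K → (restr T U).Reachable a b)
    (hdeg : ∀ v ∈ U, dg T v ≤ k)
    (hfree : ∀ u ∈ U, ¬ r u u → ∃ T' ≤ G, (∀ a b, ¬ (a ∈ U ∧ b ∈ U) → (T'.Adj a b ↔ T.Adj a b)) ∧
      (∀ v ∈ U, v ∈ K → (restr T' U).Reachable u v) ∧ (∀ v ∈ U, dg T' v ≤ k) ∧ dg T' u < k) :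
    Good G T K k U := by
  refine ⟨hne, hconn, hdeg, ?_⟩
  intro u hu
  by_cases huu : r u u
  · have hg := hr.good u huu
    obtain ⟨T', hT'G, hoff, hre, hd, hdu⟩ := hg.free u huu
    have hsub : {w | r u w} ⊆ U := fun w hw => hsat u hu w hw
    refine ⟨T', hT'G, ?_, ?_, ?_, hdu⟩
    · intro a b hab
      exact hoff a b (fun h => hab ⟨hsub h.1, hsub h.2⟩)
    · intro v hv hvK
      obtain ⟨c, hc, hcK⟩ := hg.ne
      have h1 : (restr T' U).Reachable u c := (hre c hc hcK).mono (restr_mono _ hsub)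
      refine h1.trans (reach_of_edges ?_ (hconn c (hsub hc) hcK v hv hvK))
      rintro a b ⟨hab, haU, hbU⟩
      by_cases h : r u a ∧ r u b
      · have ha := hre a h.1 (hTK _ _ hab)
        have hb := hre b h.2 (hTK _ _ hab.symm)
        exact (ha.symm.trans hb).mono (restr_mono _ hsub)
      · exact Adj.reachable ⟨(hoff a b h).2 hab, haU, hbU⟩
    · intro v hv
      by_cases h : r u v
      · exact hd v h
      · refine le_trans (dg_mono fun b hb => (hoff v b (fun h' => h h'.1)).1 hb) (hdeg v hv)
  · exact hfree u hu huu

/-- swap -/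
lemma swap {G T : SimpleGraph V} {K : Set V} {k : ℕ} {r : V → V → Prop}
    (hr : Valid G T K k r) (hTG : T ≤ G) (hTK : ∀ a b, T.Adj a b → a ∈ K)
    {x y c1 c2 u : V} (hx : r c1 x) (hy : r c2 y) (hc1 : c1 ∈ K) (hc2 : c2 ∈ K)
    (hn : ¬ r c1 c2)
    (hxy : G.Adj x y) (P : T.Walk c1 c2) (hP : P.IsPath) (huP : u ∈ P.support) (huD : ¬ r u u)
    (U : Set V) (hPU : ∀ v ∈ P.support, v ∈ U) (hsat : ∀ v ∈ U, ∀ w, r v w → w ∈ U) :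
    ∃ T' ≤ G, (∀ a b, ¬ (a ∈ U ∧ b ∈ U) → (T'.Adj a b ↔ T.Adj a b)) ∧
      (∀ a b, T.Adj a b → a ∈ U → b ∈ U → (restr T' U).Reachable a b) ∧
      (∀ v, dg T' v ≤ max k (dg T v)) ∧ dg T' u < dg T u := by
  have h11 : r c1 c1 := hr.trans _ _ _ hx (hr.symm _ _ hx)
  have h22 : r c2 c2 := hr.trans _ _ _ hy (hr.symm _ _ hy)
  have hg1 := hr.good c1 h11
  have hg2 := hr.good c2 h22
  have hdisj : ∀ v, r c1 v → r c2 v → False := fun v h1 h2 =>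
    hn (hr.trans _ _ _ h1 (hr.symm _ _ h2))
  obtain ⟨T1, hT1G, hoff1, hre1, hd1, hdx⟩ := hg1.free x hx
  obtain ⟨T2, hT2G, hoff2, hre2, hd2, hdy⟩ := hg2.free y hy
  simp only [Set.mem_ofPred_eq] at hoff1 hre1 hd1 hoff2 hre2 hd2
  have hu1 : ¬ r c1 u := fun h => huD (hr.trans _ _ _ (hr.symm _ _ h) h)
  have hu2 : ¬ r c2 u := fun h => huD (hr.trans _ _ _ (hr.symm _ _ h) h)
  have huc1 : u ≠ c1 := fun h => hu1 (h ▸ h11)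
  obtain ⟨u', q1, q2, hu'u, hsupp⟩ := walk_split P u huP huc1
  have hnd := hP.support_nodup
  rw [hsupp, List.nodup_append] at hnd
  have hq1 : ∀ v ∈ q1.support, v ∈ U ∧ v ≠ u := fun v hv =>
    ⟨hPU v (by rw [hsupp]; simp [hv]), hnd.2.2 v hv u q2.start_mem_support⟩
  have hq2 : ∀ v ∈ q2.support, v ∈ U ∧ v ≠ u' := fun v hv =>
    ⟨hPU v (by rw [hsupp]; simp [hv]), (hnd.2.2 u' q1.end_mem_support v hv).symm⟩
  have hc1U : c1 ∈ U := hPU _ P.start_mem_support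
  have hc2U : c2 ∈ U := hPU _ P.end_mem_support
  have hC1 : ∀ v, r c1 v → v ∈ U := fun v hv => hsat _ hc1U _ hv
  have hC2 : ∀ v, r c2 v → v ∈ U := fun v hv => hsat _ hc2U _ hv
  have huU : u ∈ U := hPU u huP
  have hu'U : u' ∈ U := (hq1 u' q1.end_mem_support).1
  have hxU := hC1 x hx
  have hyU := hC2 y hy
  let T' : SimpleGraph V :=
    { Adj := fun a b => (r c1 a ∧ r c1 b ∧ T1.Adj a b) ∨ (r c2 a ∧ r c2 b ∧ T2.Adj a b) ∨
        (¬ (r c1 a ∧ r c1 b) ∧ ¬ (r c2 a ∧ r c2 b) ∧ T.Adj a b ∧ ¬ (a = u ∧ b = u') ∧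
          ¬ (a = u' ∧ b = u)) ∨ (a = x ∧ b = y) ∨ (a = y ∧ b = x)
      symm := ⟨by
        rintro a b (⟨h1, h2, h3⟩ | ⟨h1, h2, h3⟩ | ⟨h1, h2, h3, h4, h5⟩ | ⟨h1, h2⟩ | ⟨h1, h2⟩)
        · exact Or.inl ⟨h2, h1, h3.symm⟩
        · exact Or.inr (Or.inl ⟨h2, h1, h3.symm⟩)
        · exact Or.inr (Or.inr (Or.inl ⟨fun h => h1 h.symm, fun h => h2 h.symm, h3.symm,
            fun h => h5 h.symm, fun h => h4 h.symm⟩))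
        · exact Or.inr (Or.inr (Or.inr (Or.inr ⟨h2, h1⟩)))
        · exact Or.inr (Or.inr (Or.inr (Or.inl ⟨h2, h1⟩)))⟩
      loopless := ⟨by
        rintro a (⟨h1, h2, h3⟩ | ⟨h1, h2, h3⟩ | ⟨h1, h2, h3, h4, h5⟩ | ⟨h1, h2⟩ | ⟨h1, h2⟩)
        · exact h3.ne rfl
        · exact h3.ne rfl
        · exact h3.ne rfl
        · exact hxy.ne (h1.symm.trans h2)
        · exact hxy.ne (h2.symm.trans h1)⟩ }
  have hT' : ∀ a b, T'.Adj a b ↔ ((r c1 a ∧ r c1 b ∧ T1.Adj a b) ∨ (r c2 a ∧ r c2 b ∧ T2.Adj a b) ∨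
        (¬ (r c1 a ∧ r c1 b) ∧ ¬ (r c2 a ∧ r c2 b) ∧ T.Adj a b ∧ ¬ (a = u ∧ b = u') ∧
          ¬ (a = u' ∧ b = u)) ∨ (a = x ∧ b = y) ∨ (a = y ∧ b = x)) := fun a b => Iff.rfl
  clear_value T'
  refine ⟨T', ?_, ?_, ?_, ?_, ?_⟩
  · intro a b h
    rcases (hT' a b).1 h with ⟨h1, h2, h3⟩ | ⟨h1, h2, h3⟩ | ⟨h1, h2, h3, h4, h5⟩ | ⟨h1, h2⟩ | ⟨h1, h2⟩
    · exact hT1G h3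
    · exact hT2G h3
    · exact hTG h3
    · rw [h1, h2]; exact hxy
    · rw [h1, h2]; exact hxy.symm
  · intro a b hab
    rw [hT']
    constructor
    · rintro (⟨h1, h2, h3⟩ | ⟨h1, h2, h3⟩ | ⟨h1, h2, h3, h4, h5⟩ | ⟨h1, h2⟩ | ⟨h1, h2⟩)
      · exact absurd ⟨hC1 _ h1, hC1 _ h2⟩ hab
      · exact absurd ⟨hC2 _ h1, hC2 _ h2⟩ hab
      · exact h3
      · subst h1 h2; exact absurd ⟨hxU, hyU⟩ hab
      · subst h1 h2; exact absurd ⟨hyU, hxU⟩ hab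
    · intro h
      refine Or.inr (Or.inr (Or.inl ⟨fun h => hab ⟨hC1 _ h.1, hC1 _ h.2⟩,
        fun h => hab ⟨hC2 _ h.1, hC2 _ h.2⟩, h, ?_, ?_⟩))
      · rintro ⟨rfl, rfl⟩; exact hab ⟨huU, hu'U⟩
      · rintro ⟨rfl, rfl⟩; exact hab ⟨hu'U, huU⟩
  · have hR1 : ∀ a, r c1 a → a ∈ K → (restr T' U).Reachable x a := by
      intro a ha haK
      refine (hre1 a ha haK).mono ?_
      rintro v w ⟨h1, h2, h3⟩
      exact ⟨(hT' v w).2 (Or.inl ⟨h2, h3, h1⟩), hC1 _ h2, hC1 _ h3⟩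
    have hR2 : ∀ a, r c2 a → a ∈ K → (restr T' U).Reachable y a := by
      intro a ha haK
      refine (hre2 a ha haK).mono ?_
      rintro v w ⟨h1, h2, h3⟩
      exact ⟨(hT' v w).2 (Or.inr (Or.inl ⟨h2, h3, h1⟩)), hC2 _ h2, hC2 _ h3⟩
    have hRne : ∀ a b, T.Adj a b → a ∈ U → b ∈ U → ¬ (a = u ∧ b = u') → ¬ (a = u' ∧ b = u) →
        (restr T' U).Reachable a b := by
      intro a b hab haU hbU h1 h2
      by_cases h3 : r c1 a ∧ r c1 b
      · exact (hR1 a h3.1 (hTK _ _ hab)).symm.trans (hR1 b h3.2 (hTK _ _ hab.symm))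
      by_cases h4 : r c2 a ∧ r c2 b
      · exact (hR2 a h4.1 (hTK _ _ hab)).symm.trans (hR2 b h4.2 (hTK _ _ hab.symm))
      exact Adj.reachable ⟨(hT' a b).2 (Or.inr (Or.inr (Or.inl ⟨h3, h4, hab, h1, h2⟩))), haU, hbU⟩
    have e1 : (restr T' U).Reachable c1 u' := by
      refine reach_of_walk {v | v ∈ U ∧ v ≠ u} ?_ q1 hq1
      intro a b ha hb hab
      exact hRne a b hab ha.1 hb.1 (fun h => ha.2 h.1) (fun h => hb.2 h.2)
    have e2 : (restr T' U).Reachable u c2 := by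
      refine reach_of_walk {v | v ∈ U ∧ v ≠ u'} ?_ q2 hq2
      intro a b ha hb hab
      exact hRne a b hab ha.1 hb.1 (fun h => hb.2 h.2) (fun h => ha.2 h.1)
    have e3 : (restr T' U).Reachable x y :=
      Adj.reachable ⟨(hT' x y).2 (Or.inr (Or.inr (Or.inr (Or.inl ⟨rfl, rfl⟩)))), hxU, hyU⟩
    have e4 : (restr T' U).Reachable u' u :=
      e1.symm.trans ((hR1 c1 h11 hc1).symm.trans (e3.trans ((hR2 c2 h22 hc2).trans e2.symm)))
    intro a b hab haU hbU
    by_cases h1 : a = u ∧ b = u'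
    · rw [h1.1, h1.2]; exact e4.symm
    by_cases h2 : a = u' ∧ b = u
    · rw [h2.1, h2.2]; exact e4
    exact hRne a b hab haU hbU h1 h2
  · intro v
    by_cases hv1 : r c1 v
    · refine le_trans ?_ (le_max_left _ _)
      by_cases hvx : v = x
      · subst hvx
        have : T'.neighborSet v ⊆ insert y (T1.neighborSet v) := by
          intro b hb
          rcases (hT' v b).1 hb with ⟨h1, h2, h3⟩ | ⟨h1, h2, h3⟩ | ⟨h1, h2, h3, h4, h5⟩ | ⟨h1, h2⟩ | ⟨h1, h2⟩
          · exact Or.inr h3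
          · exact (hdisj _ hv1 h1).elim
          · exact Or.inr ((hoff1 v b h1).2 h3)
          · exact Or.inl h2
          · exact (hdisj _ hv1 (h1 ▸ hy)).elim
        have h2 := Set.ncard_le_ncard this (Set.toFinite _)
        have h3 := Set.ncard_insert_le y (T1.neighborSet v)
        unfold dg at *
        omega
      · refine le_trans (dg_mono ?_) (hd1 v hv1)
        intro b hb
        rcases (hT' v b).1 hb with ⟨h1, h2, h3⟩ | ⟨h1, h2, h3⟩ | ⟨h1, h2, h3, h4, h5⟩ | ⟨h1, h2⟩ | ⟨h1, h2⟩
        · exact h3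
        · exact (hdisj _ hv1 h1).elim
        · exact (hoff1 v b h1).2 h3
        · exact absurd h1 hvx
        · exact (hdisj _ hv1 (h1 ▸ hy)).elim
    by_cases hv2 : r c2 v
    · refine le_trans ?_ (le_max_left _ _)
      by_cases hvy : v = y
      · subst hvy
        have : T'.neighborSet v ⊆ insert x (T2.neighborSet v) := by
          intro b hb
          rcases (hT' v b).1 hb with ⟨h1, h2, h3⟩ | ⟨h1, h2, h3⟩ | ⟨h1, h2, h3, h4, h5⟩ | ⟨h1, h2⟩ | ⟨h1, h2⟩
          · exact (hv1 h1).elim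
          · exact Or.inr h3
          · exact Or.inr ((hoff2 v b h2).2 h3)
          · exact (hv1 (h1 ▸ hx)).elim
          · exact Or.inl h2
        have h2 := Set.ncard_le_ncard this (Set.toFinite _)
        have h3 := Set.ncard_insert_le x (T2.neighborSet v)
        unfold dg at *
        omega
      · refine le_trans (dg_mono ?_) (hd2 v hv2)
        intro b hb
        rcases (hT' v b).1 hb with ⟨h1, h2, h3⟩ | ⟨h1, h2, h3⟩ | ⟨h1, h2, h3, h4, h5⟩ | ⟨h1, h2⟩ | ⟨h1, h2⟩
        · exact (hv1 h1).elim
        · exact h3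
        · exact (hoff2 v b h2).2 h3
        · exact (hv1 (h1 ▸ hx)).elim
        · exact absurd h1 hvy
    refine le_trans (dg_mono ?_) (le_max_right _ _)
    intro b hb
    rcases (hT' v b).1 hb with ⟨h1, h2, h3⟩ | ⟨h1, h2, h3⟩ | ⟨h1, h2, h3, h4, h5⟩ | ⟨h1, h2⟩ | ⟨h1, h2⟩
    · exact (hv1 h1).elim
    · exact (hv2 h1).elim
    · exact h3
    · exact (hv1 (h1 ▸ hx)).elim
    · exact (hv2 (h1 ▸ hy)).elim
  · refine Set.ncard_lt_ncard ?_ (Set.toFinite _)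
    rw [Set.ssubset_iff_of_subset]
    · refine ⟨u', hu'u.symm, ?_⟩
      intro hb
      rcases (hT' u u').1 hb with ⟨h1, h2, h3⟩ | ⟨h1, h2, h3⟩ | ⟨h1, h2, h3, h4, h5⟩ | ⟨h1, h2⟩ | ⟨h1, h2⟩
      · exact hu1 h1
      · exact hu2 h1
      · exact h4 ⟨rfl, rfl⟩
      · exact hu1 (h1 ▸ hx)
      · exact hu2 (h1 ▸ hy)
    · intro b hb
      rcases (hT' u b).1 hb with ⟨h1, h2, h3⟩ | ⟨h1, h2, h3⟩ | ⟨h1, h2, h3, h4, h5⟩ | ⟨h1, h2⟩ | ⟨h1, h2⟩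
      · exact (hu1 h1).elim
      · exact (hu2 h1).elim
      · exact h3
      · exact (hu1 (h1 ▸ hx)).elim
      · exact (hu2 (h1 ▸ hy)).elim

/-- maximal state -/
lemma exists_state {G T : SimpleGraph V} {K : Set V} {k : ℕ} (hk : 2 ≤ k)
    (hTG : T ≤ G) (hTK : ∀ a b, T.Adj a b → a ∈ K)
    (hK : ∀ a ∈ K, ∀ b ∈ K, T.Reachable a b)
    (hmin : ∀ T' ≤ G, (∀ a b, T.Adj a b → T'.Reachable a b) →
      (∀ v, dg T' v ≤ max k (dg T v)) → ∀ s, k < dg T s → ¬ dg T' s < dg T s) :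
    ∃ r : V → V → Prop, Valid G T K k r ∧ (∀ x y, r x x → r y y → G.Adj x y → r x y) ∧
      (∀ z y, z ∉ K → r y y → G.Adj z y → r z z) := by
  classical
  have hfin : ({r | Valid G T K k r} : Set (V → V → Prop)).Finite := Set.toFinite _
  have hnon : ({r | Valid G T K k r} : Set (V → V → Prop)).Nonempty := by
    refine ⟨fun a b => a = b ∧ a ∈ K ∧ dg T a < k, ?_, ?_, ?_, ?_⟩
    · rintro a b ⟨rfl, h⟩; exact ⟨rfl, h⟩
    · rintro a b c ⟨rfl, h⟩ ⟨rfl, h'⟩; exact ⟨rfl, h⟩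
    · rintro v ⟨-, hvK, hv⟩
      refine ⟨⟨v, ⟨rfl, hvK, hv⟩, hvK⟩, ?_, ?_, ?_⟩
      · rintro a ⟨rfl, -⟩ - b ⟨rfl, -⟩ -
        exact Reachable.refl _
      · rintro a ⟨rfl, -⟩; exact hv.le
      · rintro a ⟨rfl, -⟩
        refine ⟨T, hTG, fun _ _ _ => Iff.rfl, ?_, ?_, hv⟩
        · rintro b ⟨rfl, -⟩ -; exact Reachable.refl _
        · rintro b ⟨rfl, -⟩; exact hv.le
    · intro v hvK hv; exact ⟨rfl, hvK, hv⟩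
  obtain ⟨r, hr⟩ := hfin.exists_maximal hnon
  have hv : Valid G T K k r := hr.1
  have hrefl : ∀ a b, r a b → r a a := fun a b h => hv.trans _ _ _ h (hv.symm _ _ h)
  have key : ∀ U : Set V, (∀ v ∈ U, ∀ w, r v w → w ∈ U) → Good G T K k U →
      ∀ x ∈ U, ∀ y ∈ U, r x y := by
    intro U hsat hU x hx y hy
    have hval : Valid G T K k (fun a b => r a b ∨ (a ∈ U ∧ b ∈ U)) := by
      refine ⟨?_, ?_, ?_, ?_⟩
      · rintro a b (h | h)
        · exact Or.inl (hv.symm _ _ h)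
        · exact Or.inr h.symm
      · rintro a b c (h | h) (h' | h')
        · exact Or.inl (hv.trans _ _ _ h h')
        · exact Or.inr ⟨hsat b h'.1 a (hv.symm _ _ h), h'.2⟩
        · exact Or.inr ⟨h.1, hsat b h.2 c h'⟩
        · exact Or.inr ⟨h.1, h'.2⟩
      · intro v hvv
        by_cases hvU : v ∈ U
        · have : {u | r v u ∨ (v ∈ U ∧ u ∈ U)} = U := by
            ext w
            constructor
            · rintro (h | h)
              · exact hsat v hvU w h
              · exact h.2
            · intro h; exact Or.inr ⟨hvU, h⟩
          rw [this]; exact hU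
        · have : {u | r v u ∨ (v ∈ U ∧ u ∈ U)} = {u | r v u} := by
            ext w
            constructor
            · rintro (h | h)
              · exact h
              · exact absurd h.1 hvU
            · intro h; exact Or.inl h
          rw [this]
          refine hv.good v ?_
          rcases hvv with h | h
          · exact h
          · exact absurd h.1 hvU
      · intro v hvK h; exact Or.inl (hv.low v hvK h)
    have hle : r ≤ (fun a b => r a b ∨ (a ∈ U ∧ b ∈ U)) := fun a b h => Or.inl h
    exact hr.2 hval hle x y (Or.inr ⟨hx, hy⟩)
  refine ⟨r, hv, ?_, ?_⟩
  · intro x y hx hy hxy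
    by_contra hnxy
    obtain ⟨c1, hc1, hc1K⟩ := (hv.good x hx).ne
    obtain ⟨c2, hc2, hc2K⟩ := (hv.good y hy).ne
    have hc1 : r x c1 := hc1
    have hc2 : r y c2 := hc2
    have hn : ¬ r c1 c2 := fun h =>
      hnxy (hv.trans _ _ _ hc1 (hv.trans _ _ _ h (hv.symm _ _ hc2)))
    obtain ⟨P, hP⟩ := (hK c1 hc1K c2 hc2K).exists_isPath
    have hPK : ∀ v ∈ P.support, v ∈ K := by
      intro v hvP
      by_cases h : v = c1
      · rw [h]; exact hc1K
      · obtain ⟨u', q1, q2, h1, -⟩ := walk_split P v hvP h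
        exact hTK _ _ h1.symm
    set U : Set V := {v | v ∈ P.support ∨ ∃ p ∈ P.support, r p v} with hUdef
    have hPU : ∀ v ∈ P.support, v ∈ U := fun v h => Or.inl h
    have hsat : ∀ v ∈ U, ∀ w, r v w → w ∈ U := by
      rintro v (h | ⟨p, hp, h⟩) w hw
      · exact Or.inr ⟨v, h, hw⟩
      · exact Or.inr ⟨p, hp, hv.trans _ _ _ h hw⟩
    have hsw := fun u (hu : u ∈ P.support) (huD : ¬ r u u) =>
      swap hv hTG hTK (hv.symm _ _ hc1) (hv.symm _ _ hc2) hc1K hc2K hn hxy P hP hu huD U hPU hsat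
    have hlow : ∀ s ∈ P.support, dg T s ≤ k := by
      intro s hs
      by_contra hsk
      have hsD : ¬ r s s := fun h => hsk ((hv.good s h).deg s h)
      obtain ⟨T', hT'G, hoff, hre, hd, hds⟩ := hsw s hs hsD
      refine hmin T' hT'G ?_ hd s (not_le.1 hsk) hds
      intro a b hab
      by_cases h : a ∈ U ∧ b ∈ U
      · exact (hre a b hab h.1 h.2).mono (restr_le _ _)
      · exact Adj.reachable ((hoff a b h).2 hab)
    have hdeg : ∀ v ∈ U, dg T v ≤ k := by
      rintro v (h | ⟨p, hp, h⟩)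
      · exact hlow v h
      · exact (hv.good v (hrefl _ _ (hv.symm _ _ h))).deg v (hrefl _ _ (hv.symm _ _ h))
    have hPconn : ∀ v ∈ P.support, (restr T U).Reachable c1 v := by
      intro v hvP
      refine reach_of_walk U (fun a b ha hb hab => Adj.reachable (G := restr T U) ⟨hab, ha, hb⟩)
        (P.takeUntil v hvP) ?_
      intro w hw
      exact hPU w (P.support_takeUntil_subset_support hvP hw)
    have hc1conn : ∀ a ∈ U, a ∈ K → (restr T U).Reachable c1 a := by
      rintro a (h | ⟨p, hp, h⟩) haK
      · exact hPconn a h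
      · refine (hPconn p hp).trans (((hv.good p (hrefl _ _ h)).conn p (hrefl _ _ h)
          (hPK p hp) a h haK).mono (restr_mono _ ?_))
        intro w hw
        exact Or.inr ⟨p, hp, hw⟩
    have hconn : ∀ a ∈ U, a ∈ K → ∀ b ∈ U, b ∈ K → (restr T U).Reachable a b :=
      fun a ha haK b hb hbK => (hc1conn a ha haK).symm.trans (hc1conn b hb hbK)
    have hgood : Good G T K k U := by
      refine good_union hv hTK U hsat ⟨c1, hPU _ P.start_mem_support, hc1K⟩ hconn hdeg ?_
      intro u hu huD
      have huP : u ∈ P.support := by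
        rcases hu with h | ⟨p, hp, h⟩
        · exact h
        · exact absurd (hrefl _ _ (hv.symm _ _ h)) huD
      obtain ⟨T', hT'G, hoff, hre, hd, hds⟩ := hsw u huP huD
      refine ⟨T', hT'G, hoff, ?_, ?_, lt_of_lt_of_le hds (hlow u huP)⟩
      · intro v hvU hvK
        refine reach_of_edges ?_ (hconn u hu (hPK u huP) v hvU hvK)
        rintro a b ⟨hab, ha, hb⟩
        exact hre a b hab ha hb
      · intro v hvU
        exact (hd v).trans (max_le le_rfl (hdeg v hvU))
    exact hn (key U hsat hgood c1 (hPU _ P.start_mem_support) c2 (hPU _ P.end_mem_support))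
  · intro z y hzK hy hzy
    by_contra hzD
    have hg := hv.good y hy
    have hzy' : ¬ r y z := fun h => hzD (hrefl _ _ (hv.symm _ _ h))
    have hzT : ∀ b, ¬ T.Adj z b := fun b h => hzK (hTK _ _ h)
    set U : Set V := {v | v = z ∨ r y v} with hUdef
    have hsub : {v | r y v} ⊆ U := fun v h => Or.inr h
    have hzU : z ∈ U := Or.inl rfl
    have hyU : y ∈ U := Or.inr hy
    have hsat : ∀ v ∈ U, ∀ w, r v w → w ∈ U := by
      rintro v (rfl | h) w hw
      · exact absurd (hrefl _ _ hw) hzD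
      · exact Or.inr (hv.trans _ _ _ h hw)
    have hUK : ∀ a ∈ U, a ∈ K → r y a := by
      rintro a (rfl | h) haK
      · exact absurd haK hzK
      · exact h
    have hgood : Good G T K k U := by
      refine good_union hv hTK U hsat ?_ ?_ ?_ ?_
      · obtain ⟨c, hc, hcK⟩ := hg.ne
        exact ⟨c, hsub hc, hcK⟩
      · intro a ha haK b hb hbK
        exact (hg.conn a (hUK a ha haK) haK b (hUK b hb hbK) hbK).mono (restr_mono _ hsub)
      · rintro v (rfl | h)
        · have : T.neighborSet v = ∅ := by
            ext b; constructor
            · intro h; exact absurd h (hzT b)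
            · intro h; exact absurd h (Set.notMem_empty b)
          simp [dg, this]
        · exact hg.deg v h
      · rintro u (rfl | h) huD
        · obtain ⟨T2, hT2G, hoff, hre, hd, hdy⟩ := hg.free y hy
          have hzT2 : ∀ b, ¬ T2.Adj u b := fun b h =>
            hzT b ((hoff u b (fun h' => hzy' h'.1)).1 h)
          let T' : SimpleGraph V :=
            { Adj := fun a b => T2.Adj a b ∨ (a = u ∧ b = y) ∨ (a = y ∧ b = u)
              symm := ⟨by
                rintro a b (h | h | h)
                · exact Or.inl h.symm
                · exact Or.inr (Or.inr h.symm)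
                · exact Or.inr (Or.inl h.symm)⟩
              loopless := ⟨by
                rintro a (h | h | h)
                · exact h.ne rfl
                · exact hzy.ne (h.1.symm.trans h.2)
                · exact hzy.ne (h.2.symm.trans h.1)⟩ }
          have hT' : ∀ a b, T'.Adj a b ↔ (T2.Adj a b ∨ (a = u ∧ b = y) ∨ (a = y ∧ b = u)) :=
            fun _ _ => Iff.rfl
          clear_value T'
          have hdu : dg T' u ≤ 1 := by
            have : T'.neighborSet u ⊆ {y} := by
              intro b hb
              rcases (hT' u b).1 hb with h | h | h
              · exact absurd h (hzT2 b)
              · exact h.2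
              · exact absurd h.1 hzy.ne
            have := Set.ncard_le_ncard this (Set.toFinite _)
            simpa [dg] using this
          refine ⟨T', ?_, ?_, ?_, ?_, by omega⟩
          · intro a b hab
            rcases (hT' a b).1 hab with h | h | h
            · exact hT2G h
            · rw [h.1, h.2]; exact hzy
            · rw [h.1, h.2]; exact hzy.symm
          · intro a b hab
            rw [hT', ← hoff a b (fun h => hab ⟨hsub h.1, hsub h.2⟩)]
            constructor
            · rintro (h | h | h)
              · exact h
              · exact absurd ⟨h.1 ▸ hzU, h.2 ▸ hyU⟩ hab
              · exact absurd ⟨h.1 ▸ hyU, h.2 ▸ hzU⟩ hab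
            · exact fun h => Or.inl h
          · intro v hvU hvK
            have h1 : (restr T' U).Reachable u y :=
              Adj.reachable ⟨(hT' u y).2 (Or.inr (Or.inl ⟨rfl, rfl⟩)), hzU, hyU⟩
            refine h1.trans ((hre v (hUK v hvU hvK) hvK).mono ?_)
            rintro a b ⟨h2, h3, h4⟩
            exact ⟨(hT' a b).2 (Or.inl h2), hsub h3, hsub h4⟩
          · rintro v (rfl | h)
            · omega
            · have hvu : v ≠ u := fun h' => hzy' (h' ▸ h)
              by_cases hvy : v = y
              · subst hvy
                have : T'.neighborSet v ⊆ insert u (T2.neighborSet v) := by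
                  intro b hb
                  rcases (hT' v b).1 hb with h | h | h
                  · exact Or.inr h
                  · exact absurd h.1 hvu
                  · exact Or.inl h.2
                have h2 := Set.ncard_le_ncard this (Set.toFinite _)
                have h3 := Set.ncard_insert_le u (T2.neighborSet v)
                unfold dg at *
                omega
              · refine le_trans (dg_mono ?_) (hd v h)
                intro b hb
                rcases (hT' v b).1 hb with h | h | h
                · exact h
                · exact absurd h.1 hvu
                · exact absurd h.1 hvy
        · exact absurd (hrefl _ _ (hv.symm _ _ h)) huD
    exact hzD (key U hsat hgood z hzU z hzU)

/-- counting + cut -/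
lemma count_cut {G T : SimpleGraph V} {K X : Set V} {k : ℕ} {r : V → V → Prop} {φ : ℝ}
    (hk : 3 ≤ k) (hφ : 0 < φ) (hkφ : 6 < φ * ((k : ℝ) - 2))
    (hX : IsVertexExpandingOn G Set.univ X φ)
    (hTG : T ≤ G) (hr : Valid G T K k r)
    (hB : ∀ x y, r x x → r y y → G.Adj x y → r x y)
    (hab : ∀ z y, z ∉ K → r y y → G.Adj z y → r z z)
    (x0 : V) (hx0 : x0 ∈ X) (hXK : X ⊆ K) (p : V → V) (d : V → ℕ)
    (hp : ∀ v ∈ K, v ≠ x0 → T.Adj v (p v) ∧ d (p v) < d v)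
    (hT : ∀ a b, T.Adj a b → a ∈ K ∧ b ∈ K ∧ ((a ≠ x0 ∧ p a = b) ∨ (b ≠ x0 ∧ p b = a)))
    (hleaf : ∀ v ∈ K, v ∉ X → ∃ w ∈ K, w ≠ x0 ∧ p w = v)
    (s : V) (hs : k < dg T s) (hsK : s ∈ K) : False := by
  classical
  have hrefl : ∀ a b, r a b → r a a := fun a b h => hr.trans _ _ _ h (hr.symm _ _ h)
  have hrefl' : ∀ a b, r a b → r b b := fun a b h => hr.trans _ _ _ (hr.symm _ _ h) h
  let W : Finset V := Finset.univ.filter fun v => v ∈ K ∧ ¬ r v v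
  let A : Finset V := Finset.univ.filter fun v => v ∈ K ∧ v ≠ x0 ∧ p v ∈ W
  let Top : Finset V := Finset.univ.filter fun v => v ∈ K ∧ r v v ∧ (v = x0 ∨ ¬ r v (p v))
  let XT : Finset V := Top.filter fun v => ∃ x ∈ X, r v x
  let FT : Finset V := Top.filter fun v => ¬ ∃ x ∈ X, r v x
  have mW : ∀ v, v ∈ W ↔ v ∈ K ∧ ¬ r v v := by intro v; simp [W]
  have mA : ∀ v, v ∈ A ↔ v ∈ K ∧ v ≠ x0 ∧ p v ∈ W := by intro v; simp [A]
  have mT : ∀ v, v ∈ Top ↔ v ∈ K ∧ r v v ∧ (v = x0 ∨ ¬ r v (p v)) := by intro v; simp [Top]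
  have mXT : ∀ v, v ∈ XT ↔ v ∈ Top ∧ ∃ x ∈ X, r v x := by intro v; simp [XT]
  have mFT : ∀ v, v ∈ FT ↔ v ∈ Top ∧ ¬ ∃ x ∈ X, r v x := by
    intro v; simp only [FT, Finset.mem_filter]
  have hTopcard : XT.card + FT.card = Top.card := Finset.card_filter_add_card_filter_not _
  clear_value W A Top XT FT
  have hsW : s ∈ W := (mW s).2 ⟨hsK, fun h => absurd ((hr.good s h).deg s h) (not_le.2 hs)⟩
  have hWdeg : ∀ w ∈ W, k ≤ dg T w := by
    intro w hw
    by_contra h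
    exact ((mW w).1 hw).2 (hr.low w ((mW w).1 hw).1 (not_le.1 h))
  -- uniqueness of tops
  have huniq : ∀ t ∈ Top, ∀ t' ∈ Top, r t t' → t = t' := by
    intro t ht t' ht' htt'
    obtain ⟨htK, htD, ht⟩ := (mT t).1 ht
    obtain ⟨htK', htD', ht'⟩ := (mT t').1 ht'
    obtain ⟨w⟩ := (hr.good t htD).conn t' htt' htK' t htD htK
    let step : V → V → Prop := fun a b => a ≠ x0 ∧ p a = b ∧ r t a ∧ r t b
    have main : ∀ (a b : V) (w : (restr T {u | r t u}).Walk a b), b = t →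
        Relation.ReflTransGen step a t := by
      intro a b w
      induction w with
      | nil => rintro rfl; exact Relation.ReflTransGen.refl
      | @cons a c b h q ih =>
        intro hb
        have ihc := ih hb
        obtain ⟨hac, ha, hc⟩ := h
        have ha : r t a := ha
        have hc : r t c := hc
        rcases (hT a c hac).2.2 with ⟨h1, h2⟩ | ⟨h1, h2⟩
        · exact Relation.ReflTransGen.head ⟨h1, h2, ha, hc⟩ ihc
        · rcases Relation.ReflTransGen.cases_head ihc with h3 | ⟨e, h3, h4⟩
          · subst h3
            rcases ht with h5 | h5
            · exact absurd h5 h1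
            · rw [h2] at h5; exact absurd ha h5
          · obtain ⟨-, h6, -, -⟩ := h3
            rw [h2] at h6
            subst h6
            exact h4
    rcases Relation.ReflTransGen.cases_head (main _ _ w rfl) with h3 | ⟨e, h3, -⟩
    · exact h3.symm
    · obtain ⟨h1, h2, h4, h5⟩ := h3
      rcases ht' with h6 | h6
      · exact absurd h6 h1
      · rw [h2] at h6
        exact absurd (hr.trans _ _ _ (hr.symm _ _ h4) h5) h6
  -- |A| ≥ (k-1)|W|
  have hAcard : W.card * (k - 1) ≤ A.card := by
    rw [Finset.card_eq_sum_card_fiberwise (f := p) (s := A) (t := W)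
      (fun v hv => ((mA v).1 hv).2.2), ← smul_eq_mul, ← Finset.sum_const]
    refine Finset.sum_le_sum ?_
    intro w hw
    have hsub : T.neighborSet w ⊆ ((insert (p w) (A.filter fun v => p v = w) : Finset V) : Set V) := by
      intro b hb
      obtain ⟨h1, h2, h3⟩ := hT w b hb
      rcases h3 with ⟨h4, h5⟩ | ⟨h4, h5⟩
      · simp [h5]
      · simp only [Finset.coe_insert, Set.mem_insert_iff, Finset.mem_coe, Finset.mem_filter, mA]
        right
        refine ⟨⟨h2, h4, ?_⟩, h5⟩
        rw [h5]; exact hw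
    have h1 := Set.ncard_le_ncard hsub (Set.toFinite _)
    rw [Set.ncard_coe_finset] at h1
    have h2 := Finset.card_insert_le (p w) (A.filter fun v => p v = w)
    have h3 := hWdeg w hw
    unfold dg at h3
    omega
  -- X-free tops inject
  have hF : ∀ t ∈ FT, ∃ w, w ∈ W ∧ w ∉ insert x0 A ∧ r t (p w) := by
    intro t ht
    obtain ⟨htT, htX⟩ := (mFT t).1 ht
    obtain ⟨htK, htD, -⟩ := (mT t).1 htT
    obtain ⟨l, hl, hlmax⟩ := Finset.exists_max_image
      (Finset.univ.filter fun v => v ∈ K ∧ r t v) d ⟨t, by simp [htK, htD]⟩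
    simp only [Finset.mem_filter, Finset.mem_univ, true_and] at hl hlmax
    obtain ⟨w, hwK, hwx, hwl⟩ := hleaf l hl.1 (fun h => htX ⟨l, h, hl.2⟩)
    obtain ⟨hadj, hdlt⟩ := hp w hwK hwx
    rw [hwl] at hadj hdlt
    have hwD : ¬ r w w := by
      intro hw
      have h1 := hB w l hw (hrefl' _ _ hl.2) (hTG hadj)
      have h2 := hlmax w ⟨hwK, hr.trans _ _ _ hl.2 (hr.symm _ _ h1)⟩
      omega
    refine ⟨w, (mW w).2 ⟨hwK, hwD⟩, ?_, hwl ▸ hl.2⟩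
    simp only [Finset.mem_insert, mA, not_or, hwx, not_false_eq_true, true_and, hwl, mW, hwK]
    intro h
    exact h.2.2 (hrefl' _ _ hl.2)
  choose! g hg using hF
  have hFcard : FT.card ≤ (W \ insert x0 A).card := by
    refine Finset.card_le_card_of_injOn g ?_ ?_
    · intro t ht
      obtain ⟨h1, h2, -⟩ := hg t ht
      exact Finset.mem_coe.2 (Finset.mem_sdiff.2 ⟨h1, h2⟩)
    · intro t ht t' ht' htt
      refine huniq t ((mFT t).1 ht).1 t' ((mFT t').1 ht').1 ?_
      have h1 := (hg t ht).2.2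
      have h2 := (hg t' ht').2.2
      have htt : g t = g t' := htt
      rw [htt] at h1
      exact hr.trans _ _ _ h1 (hr.symm _ _ h2)
  have hx0A : x0 ∉ A := fun h => ((mA _).1 h).2.1 rfl
  have hins : (insert x0 A).card = A.card + 1 := Finset.card_insert_of_notMem hx0A
  have hsplit : insert x0 A ⊆ Top ∪ (W ∩ insert x0 A) := by
    intro v hv
    have hvK : v ∈ K := by
      rcases Finset.mem_insert.1 hv with h | h
      · rw [h]; exact hXK hx0
      · exact ((mA v).1 h).1
    by_cases hvD : r v v
    · refine Finset.mem_union_left _ ((mT v).2 ⟨hvK, hvD, ?_⟩)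
      rcases Finset.mem_insert.1 hv with h | h
      · exact Or.inl h
      · right
        intro h'
        exact ((mW _).1 ((mA v).1 h).2.2).2 (hrefl' _ _ h')
    · exact Finset.mem_union_right _ (Finset.mem_inter.2 ⟨(mW v).2 ⟨hvK, hvD⟩, hv⟩)
  have h1 := (Finset.card_le_card hsplit).trans (Finset.card_union_le _ _)
  have h2 := Finset.card_sdiff_add_card_inter W (insert x0 A)
  have hmain : W.card * (k - 1) + 1 ≤ XT.card + W.card := by omega
  have hWpos : 1 ≤ W.card := Finset.card_pos.2 ⟨s, hsW⟩
  obtain ⟨j, rfl⟩ : ∃ j, k = j + 2 := ⟨k - 2, by omega⟩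
  have hmain2 : W.card * j + 1 ≤ XT.card := by
    have : j + 2 - 1 = j + 1 := by omega
    rw [this, mul_add] at hmain
    omega
  have hj : 1 ≤ j := by omega
  have hWj : 1 ≤ W.card * j := Nat.mul_pos hWpos hj
  obtain ⟨Y1, hY1, hY1c⟩ := Finset.exists_subset_card_eq (s := XT) (n := XT.card / 2) (by omega)
  have hY2c := Finset.card_sdiff_add_card_eq_card hY1
  set Y2 := XT \ Y1 with hY2def
  have hXTT : ∀ t ∈ XT, t ∈ Top := fun t h => ((mXT t).1 h).1
  have hXTD : ∀ t ∈ XT, r t t := fun t h => ((mT t).1 (hXTT t h)).2.1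
  have hXTx : ∀ t ∈ XT, ∃ x, x ∈ X ∧ r t x := fun t h => by
    obtain ⟨x, h1, h2⟩ := ((mXT t).1 h).2
    exact ⟨x, h1, h2⟩
  choose! f hf using hXTx
  have hYXT2 : Y2 ⊆ XT := Finset.sdiff_subset
  have hcard : ∀ (Y : Finset V) (Z : Set V), Y ⊆ XT → (∀ t ∈ Y, ∀ v, r t v → v ∈ Z) →
      Y.card ≤ (X ∩ Z).ncard := by
    intro Y Z hY hZ
    rw [← Set.ncard_coe_finset Y]
    refine Set.ncard_le_ncard_of_injOn f ?_ ?_ (Set.toFinite _)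
    · intro t ht
      exact ⟨(hf t (hY ht)).1, hZ t ht _ (hf t (hY ht)).2⟩
    · intro t ht t' ht' htt
      refine huniq t (hXTT _ (hY ht)) t' (hXTT _ (hY ht')) ?_
      have h1 := (hf t (hY ht)).2
      rw [htt] at h1
      exact hr.trans _ _ _ h1 (hr.symm _ _ (hf t' (hY ht')).2)
  let L : Set V := {v | (v ∉ K ∧ ¬ r v v) ∨ ∃ t ∈ Y1, r t v}
  let R : Set V := {v | r v v ∧ ¬ ∃ t ∈ Y1, r t v}
  have hLm : ∀ v, v ∈ L ↔ ((v ∉ K ∧ ¬ r v v) ∨ ∃ t ∈ Y1, r t v) := fun _ => Iff.rfl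
  have hRm : ∀ v, v ∈ R ↔ (r v v ∧ ¬ ∃ t ∈ Y1, r t v) := fun _ => Iff.rfl
  clear_value L R
  have hY2R : ∀ t ∈ Y2, ∀ v, r t v → v ∈ R := by
    intro t ht v hv
    rw [hRm]
    refine ⟨hrefl' _ _ hv, ?_⟩
    rintro ⟨t', ht', hv'⟩
    have := huniq t' (hXTT _ (hY1 ht')) t (hXTT _ (hYXT2 ht)) (hr.trans _ _ _ hv' (hr.symm _ _ hv))
    subst this
    exact (Finset.mem_sdiff.1 ht).2 ht'
  have hY1L : ∀ t ∈ Y1, ∀ v, r t v → v ∈ L := fun t ht v hv => (hLm v).2 (Or.inr ⟨t, ht, hv⟩)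
  have hcut := hX L (W : Set V) R ?_ ?_ ?_ ?_ ?_ ?_ ?_
  · have c1 := hcard Y1 (L ∪ (W : Set V)) hY1 (fun t ht v hv => Or.inl (hY1L t ht v hv))
    have c2 := hcard Y2 (R ∪ (W : Set V)) hYXT2 (fun t ht v hv => Or.inl (hY2R t ht v hv))
    have hm : W.card * j ≤ 2 * (min (X ∩ (L ∪ (W : Set V))).ncard (X ∩ (R ∪ (W : Set V))).ncard) := by
      have : XT.card / 2 ≤ min (X ∩ (L ∪ (W : Set V))).ncard (X ∩ (R ∪ (W : Set V))).ncard :=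
        le_min (by omega) (by omega)
      omega
    rw [Set.ncard_coe_finset, ← Nat.cast_min] at hcut
    have hm' : ((W.card * j : ℕ) : ℝ) ≤ ((2 * (min (X ∩ (L ∪ (W : Set V))).ncard
      (X ∩ (R ∪ (W : Set V))).ncard) : ℕ) : ℝ) := by exact_mod_cast hm
    push_cast at hm' hcut hkφ
    have hWp : (1 : ℝ) ≤ W.card := by exact_mod_cast hWpos
    have e1 := mul_le_mul_of_nonneg_left hm' hφ.le
    have e2 : φ * (W.card * j) = W.card * (φ * (j + 2 - 2)) := by ring
    have e3 := mul_lt_mul_of_pos_left hkφ (lt_of_lt_of_le one_pos hWp)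
    nlinarith
  · ext v
    simp only [Set.mem_union, hLm, hRm, Finset.mem_coe, mW, Set.mem_univ, iff_true]
    by_cases e1 : ∃ t ∈ Y1, r t v
    · exact Or.inl (Or.inl (Or.inr e1))
    by_cases e2 : r v v
    · exact Or.inr ⟨e2, e1⟩
    by_cases e3 : v ∈ K
    · exact Or.inl (Or.inr ⟨e3, e2⟩)
    · exact Or.inl (Or.inl (Or.inl ⟨e3, e2⟩))
  · rw [Set.disjoint_left]
    intro v hv hw
    have hw := (mW v).1 hw
    rcases (hLm v).1 hv with h | ⟨t, -, h⟩
    · exact h.1 hw.1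
    · exact hw.2 (hrefl' _ _ h)
  · rw [Set.disjoint_left]
    intro v hv hw
    rw [hRm] at hw
    rcases (hLm v).1 hv with h | h
    · exact h.2 hw.1
    · exact hw.2 h
  · rw [Set.disjoint_left]
    intro v hv hw
    exact ((mW v).1 hv).2 ((hRm v).1 hw).1
  · obtain ⟨t, ht⟩ := Finset.card_pos.1 (show 0 < Y1.card by omega)
    exact ⟨t, hY1L t ht t (hXTD t (hY1 ht))⟩
  · obtain ⟨t, ht⟩ := Finset.card_pos.1 (show 0 < Y2.card by omega)
    exact ⟨t, hY2R t ht t (hXTD t (hYXT2 ht))⟩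
  · intro u hu v hv huv
    rw [hRm] at hv
    rcases (hLm u).1 hu with h | ⟨t, ht, h⟩
    · exact h.2 (hab u v h.1 hv.1 huv)
    · exact hv.2 ⟨t, ht, hr.trans _ _ _ h (hB u v (hrefl' _ _ h) hv.1 huv)⟩

/-- the graph of parent edges, except the one of a given vertex set -/
def parG (T : SimpleGraph V) (S : Set V) (p : V → V) : SimpleGraph V where
  Adj a b := T.Adj a b ∧ ((a ∈ S ∧ p a = b) ∨ (b ∈ S ∧ p b = a))
  symm := ⟨fun _ _ h => ⟨h.1.symm, h.2.symm⟩⟩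
  loopless := ⟨fun _ h => h.1.ne rfl⟩

lemma parG_le (T : SimpleGraph V) (S : Set V) (p : V → V) : parG T S p ≤ T := fun _ _ h => h.1

lemma parG_reach (T : SimpleGraph V) (S : Set V) (p : V → V) (d : V → ℕ) (x0 : V)
    (hS : ∀ v ∈ S, T.Adj v (p v) ∧ d (p v) < d v ∧ (p v = x0 ∨ p v ∈ S)) :
    ∀ n, ∀ v ∈ S, d v = n → (parG T S p).Reachable x0 v := by
  intro n
  induction n using Nat.strong_induction_on with
  | _ n ih =>
    intro v hv hd
    obtain ⟨h1, h2, h3⟩ := hS v hv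
    have e : (parG T S p).Reachable (p v) v :=
      (Adj.reachable (G := parG T S p) ⟨h1, Or.inl ⟨hv, rfl⟩⟩).symm
    rcases h3 with h3 | h3
    · rw [h3] at e; exact e
    · exact (ih (d (p v)) (by omega) (p v) h3 rfl).trans e

/-- structure of an edge-minimal connector -/
lemma exists_parent {T : SimpleGraph V} {X : Set V} {x0 : V} (hx0 : x0 ∈ X)
    (hXT : ∀ x ∈ X, T.Reachable x0 x)
    (hmin : ∀ T' < T, ¬ ∀ x ∈ X, T'.Reachable x0 x) :
    ∃ (p : V → V) (d : V → ℕ),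
      (∀ v, T.Reachable x0 v → v ≠ x0 → T.Adj v (p v) ∧ d (p v) < d v) ∧
      (∀ a b, T.Adj a b → T.Reachable x0 a ∧ T.Reachable x0 b ∧
        ((a ≠ x0 ∧ p a = b) ∨ (b ≠ x0 ∧ p b = a))) ∧
      (∀ v, T.Reachable x0 v → v ∉ X → ∃ w, T.Reachable x0 w ∧ w ≠ x0 ∧ p w = v) := by
  classical
  have hpar : ∀ v, T.Reachable x0 v → v ≠ x0 → ∃ w, T.Adj v w ∧ T.dist w x0 < T.dist v x0 := by
    intro v hv hne
    obtain ⟨q, hq⟩ := hv.symm.exists_walk_length_eq_dist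
    cases q with
    | nil => exact absurd rfl hne
    | cons h q' =>
      refine ⟨_, h, ?_⟩
      have := dist_le q'
      simp at hq
      omega
  choose! p hp using hpar
  have hfull : ∀ S : Set V, (∀ v ∈ S, T.Reachable x0 v ∧ v ≠ x0 ∧ (p v = x0 ∨ p v ∈ S)) →
      (∀ x ∈ X, x = x0 ∨ x ∈ S) → parG T S p = T := by
    intro S hS hXS
    by_contra hne
    refine hmin _ (lt_of_le_of_ne (parG_le T S p) hne) ?_
    intro x hx
    rcases hXS x hx with rfl | h
    · exact Reachable.refl _
    · refine parG_reach T S p (fun v => T.dist v x0) x0 ?_ _ x h rfl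
      intro v hv
      obtain ⟨h1, h2, h3⟩ := hS v hv
      exact ⟨(hp v h1 h2).1, (hp v h1 h2).2, h3⟩
  have hpR : ∀ v, T.Reachable x0 v → v ≠ x0 → T.Reachable x0 (p v) := fun v h1 h2 =>
    h1.trans (hp v h1 h2).1.reachable
  refine ⟨p, fun v => T.dist v x0, hp, ?_, ?_⟩
  · intro a b hab
    have h := hfull {v | T.Reachable x0 v ∧ v ≠ x0} ?_ ?_
    · rw [← h] at hab
      obtain ⟨hab, ⟨⟨h1, h2⟩, h3⟩ | ⟨⟨h1, h2⟩, h3⟩⟩ := hab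
      · exact ⟨h1, h1.trans hab.reachable, Or.inl ⟨h2, h3⟩⟩
      · exact ⟨h1.trans hab.symm.reachable, h1, Or.inr ⟨h2, h3⟩⟩
    · rintro v ⟨h1, h2⟩
      refine ⟨h1, h2, ?_⟩
      by_cases h : p v = x0
      · exact Or.inl h
      · exact Or.inr ⟨hpR v h1 h2, h⟩
    · intro x hx
      by_cases h : x = x0
      · exact Or.inl h
      · exact Or.inr ⟨hXT x hx, h⟩
  · intro v hv hvX
    by_contra hno
    push Not at hno
    have hv0 : v ≠ x0 := fun h => hvX (h ▸ hx0)
    have h := hfull {w | T.Reachable x0 w ∧ w ≠ x0 ∧ w ≠ v} ?_ ?_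
    · have hadj := (hp v hv hv0).1
      have hlt := (hp v hv hv0).2
      rw [← h] at hadj
      obtain ⟨-, ⟨⟨-, -, h1⟩, -⟩ | ⟨⟨h1, h2, h3⟩, h4⟩⟩ := hadj
      · exact h1 rfl
      · exact hno _ h1 h2 h4
    · rintro w ⟨h1, h2, h3⟩
      refine ⟨h1, h2, ?_⟩
      by_cases h : p w = x0
      · exact Or.inl h
      · exact Or.inr ⟨hpR w h1 h2, h, hno w h1 h2⟩
    · intro x hx
      by_cases h : x = x0
      · exact Or.inl h
      · exact Or.inr ⟨hXT x hx, h, fun h' => hvX (h' ▸ hx)⟩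

lemma exists_connector {G : SimpleGraph V} {φ : ℝ} (hφ : 0 < φ) {X : Set V} {x0 : V}
    (hx0 : x0 ∈ X) (hX : IsVertexExpandingOn G Set.univ X φ) {k : ℕ} (hk : 3 ≤ k)
    (hkφ : 6 < φ * ((k : ℝ) - 2)) :
    ∃ T ≤ G, (∀ x ∈ X, T.Reachable x0 x) ∧ ∀ v, dg T v ≤ k := by
  classical
  have hGX : ∀ x ∈ X, G.Reachable x0 x := by
    intro x hx
    by_contra hn
    have h := hX {v | G.Reachable x0 v} ∅ {v | ¬ G.Reachable x0 v} ?_ (by simp) ?_ (by simp)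
      ⟨x0, Reachable.refl _⟩ ⟨x, hn⟩ ?_
    · simp only [Set.union_empty, Set.ncard_empty, Nat.cast_zero] at h
      have h1 : 0 < (X ∩ {v | G.Reachable x0 v}).ncard :=
        (Set.ncard_pos (Set.toFinite _)).2 ⟨x0, hx0, Reachable.refl _⟩
      have h2 : 0 < (X ∩ {v | ¬ G.Reachable x0 v}).ncard :=
        (Set.ncard_pos (Set.toFinite _)).2 ⟨x, hx, hn⟩
      have h3 : (0 : ℝ) < min ((X ∩ {v | G.Reachable x0 v}).ncard : ℝ)
          ((X ∩ {v | ¬ G.Reachable x0 v}).ncard : ℝ) :=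
        lt_min (by exact_mod_cast h1) (by exact_mod_cast h2)
      have := mul_pos hφ h3
      linarith
    · ext v; simp [em]
    · rw [Set.disjoint_left]; intro v h1 h2; exact h2 h1
    · intro u hu v hv huv
      exact hv (Reachable.trans hu huv.reachable)
  let exc : SimpleGraph V → ℕ := fun T => ∑ v, (dg T v - k)
  let F : Set (SimpleGraph V) := {T | T ≤ G ∧ ∀ x ∈ X, T.Reachable x0 x}
  obtain ⟨T, ⟨hTG, hTX⟩, hTmin⟩ := Set.exists_min_image F
    (fun T => toLex (exc T, T.edgeSet.ncard)) (Set.toFinite _) ⟨G, le_rfl, hGX⟩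
  have hM1 : ∀ T' ≤ G, (∀ x ∈ X, T'.Reachable x0 x) → exc T ≤ exc T' := by
    intro T' h1 h2
    have h := hTmin T' ⟨h1, h2⟩
    rw [Prod.Lex.toLex_le_toLex] at h
    rcases h with h | h
    · exact h.le
    · exact h.1.le
  have hM2 : ∀ T' < T, ¬ ∀ x ∈ X, T'.Reachable x0 x := by
    intro T' h1 h2
    have h := hTmin T' ⟨h1.le.trans hTG, h2⟩
    have he : exc T' ≤ exc T := Finset.sum_le_sum fun v _ =>
      Nat.sub_le_sub_right (dg_mono fun b hb => h1.le hb) k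
    have hc : T'.edgeSet.ncard < T.edgeSet.ncard :=
      Set.ncard_lt_ncard (edgeSet_ssubset_edgeSet.2 h1) (Set.toFinite _)
    rw [Prod.Lex.toLex_le_toLex] at h
    rcases h with h | h
    · exact absurd h (not_lt.2 he)
    · exact absurd h.2 (not_le.2 hc)
  refine ⟨T, hTG, hTX, ?_⟩
  by_contra hbad
  push Not at hbad
  obtain ⟨s, hs⟩ := hbad
  obtain ⟨p, d, hp, hT, hleaf⟩ := exists_parent hx0 hTX hM2
  obtain ⟨r, hr, hB, hab⟩ := exists_state (G := G) (T := T) (K := {v | T.Reachable x0 v}) (k := k)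
    (by omega) hTG (fun a b h => (hT a b h).1) (fun a ha b hb => Reachable.trans (Reachable.symm ha) hb)
    (by
      intro T' hT'G hedge hd s hs hlt
      have h1 := hM1 T' hT'G (fun x hx => reach_of_edges hedge (hTX x hx))
      have h2 : exc T' < exc T := by
        refine Finset.sum_lt_sum ?_ ⟨s, Finset.mem_univ _, by omega⟩
        intro v _
        have := hd v
        omega
      omega)
  have hsK : T.Reachable x0 s := by
    have : (T.neighborSet s).Nonempty := by
      rw [← Set.ncard_pos (Set.toFinite _)]
      unfold dg at hs
      omega
    obtain ⟨b, hb⟩ := this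
    exact (hT s b hb).1
  exact count_cut hk hφ hkφ hX hTG hr hB hab x0 hx0 (fun x hx => hTX x hx) p d hp hT hleaf s hs hsK

lemma exists_tree {G T : SimpleGraph V} (hTG : T ≤ G) {X : Set V} {x0 : V}
    (hTX : ∀ x ∈ X, T.Reachable x0 x) :
    ∃ S : G.Subgraph, X ⊆ S.verts ∧ S.coe.IsTree ∧
      ∀ v ∈ S.verts, (S.neighborSet v).ncard ≤ dg T v := by
  classical
  let K : Set V := {v | T.Reachable x0 v}
  have hconn : (T.induce K).Connected := by
    have key : ∀ (a b : V) (w : T.Walk a b) (ha : a ∈ K) (hb : b ∈ K),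
        (T.induce K).Reachable ⟨a, ha⟩ ⟨b, hb⟩ := by
      intro a b w
      induction w with
      | nil => intro _ _; exact Reachable.refl _
      | @cons a c b h q ih =>
        intro ha hb
        have hc : c ∈ K := Reachable.trans ha h.reachable
        have hac : (T.induce K).Adj ⟨a, ha⟩ ⟨c, hc⟩ := h
        exact hac.reachable.trans (ih hc hb)
    have : Nonempty K := ⟨⟨x0, Reachable.refl _⟩⟩
    refine Connected.mk ?_
    rintro ⟨a, ha⟩ ⟨b, hb⟩
    obtain ⟨w⟩ := Reachable.trans (Reachable.symm ha) hb
    exact key a b w ha hb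
  obtain ⟨T1, hT1, hT1t⟩ := hconn.exists_isTree_le
  let S : G.Subgraph :=
    { verts := K
      Adj := fun a b => ∃ (ha : a ∈ K) (hb : b ∈ K), T1.Adj ⟨a, ha⟩ ⟨b, hb⟩
      adj_sub := by
        rintro a b ⟨ha, hb, h⟩
        exact hTG (hT1 h)
      edge_vert := by
        rintro a b ⟨ha, hb, h⟩
        exact ha
      symm := ⟨by
        rintro a b ⟨ha, hb, h⟩
        exact ⟨hb, ha, h.symm⟩⟩ }
  have hS : S.coe = T1 := by
    ext a b
    constructor
    · rintro ⟨ha, hb, h⟩; exact h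
    · intro h; exact ⟨a.2, b.2, h⟩
  refine ⟨S, fun x hx => hTX x hx, hS ▸ hT1t, ?_⟩
  intro v _
  refine Set.ncard_le_ncard ?_ (Set.toFinite _)
  rintro b ⟨ha, hb, h⟩
  exact hT1 h

end StLow

/-- Any nonempty `φ`-vertex-expanding set `X` admits a Steiner
tree spanning `X` of maximum degree at most `6/φ + 3`. -/
theorem stmt_7 (V : Type) [Fintype V] (G : SimpleGraph V) (φ : ℝ) (hφ : 0 < φ)
    (X : Set V) (hXne : X.Nonempty)
    (hX : IsVertexExpandingOn G Set.univ X φ) :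
    ∃ T : G.Subgraph, X ⊆ T.verts ∧ T.coe.IsTree ∧
      ∀ v ∈ T.verts, ((T.neighborSet v).ncard : ℝ) ≤ 6 / φ + 3 := by
  
  obtain ⟨x0, hx0⟩ := hXne
  have hpos : 0 < 6 / φ := by positivity
  have hfl := Nat.floor_le (show 0 ≤ 6 / φ + 3 by linarith)
  have hlt := Nat.lt_floor_add_one (6 / φ + 3)
  have hk : 3 ≤ ⌊6 / φ + 3⌋₊ := Nat.le_floor (by push_cast; linarith)
  have hkφ : 6 < φ * ((⌊6 / φ + 3⌋₊ : ℝ) - 2) := by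
    have h1 : 6 / φ < (⌊6 / φ + 3⌋₊ : ℝ) - 2 := by linarith
    have h2 := mul_lt_mul_of_pos_left h1 hφ
    rwa [mul_div_cancel₀ _ hφ.ne'] at h2
  obtain ⟨T, hTG, hTX, hd⟩ := StLow.exists_connector hφ hx0 hX hk hkφ
  obtain ⟨S, h1, h2, h3⟩ := StLow.exists_tree hTG hTX
  refine ⟨S, h1, h2, fun v hv => ?_⟩
  have h4 : (S.neighborSet v).ncard ≤ ⌊6 / φ + 3⌋₊ := (h3 v hv).trans (hd v)
  exact le_trans (by exact_mod_cast h4) hfl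
end

section
/- Let G = (V,E) be a finite simple graph, let φ > 0 be a real number, and let X ⊆ V be a nonempty set that is φ-tough in G. Then there exists a Steiner tree spanning X in G whose maximum degree is at most 2/φ + 3. -/
/-- `Γ` is (the vertex set of) a connected component of the subgraph of `G`
induced on `A`: it is a nonempty subset of `A`, connected in the induced sense,
and closed under adjacency within `A`. -/
def IsCompOf {V : Type*} (G : SimpleGraph V) (A Γ : Set V) : Prop :=
  Γ ⊆ A ∧ Γ.Nonempty ∧ (G.induce Γ).Connected ∧
    ∀ u ∈ Γ, ∀ v ∈ A, G.Adj u v → v ∈ Γ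

/-- `compCount G S X` is `c_{G−S}(X)`: the number of connected components of
the subgraph of `G` induced on the complement of `S` that contain a vertex
of `X`. -/
noncomputable def compCount {V : Type*} (G : SimpleGraph V) (S X : Set V) : ℕ :=
  {Γ : Set V | IsCompOf G Sᶜ Γ ∧ (Γ ∩ X).Nonempty}.ncard

/-- `X` is `φ`-tough in `G`: whenever deleting `S` separates `X` into more than
one component, `|S| ≥ φ · c_{G−S}(X)`. -/
def IsTough {V : Type*} (G : SimpleGraph V) (X : Set V) (φ : ℝ) : Prop :=
  ∀ S : Set V, 1 < compCount G S X →
    φ * (compCount G S X : ℝ) ≤ (S.ncard : ℝ)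


section Helpers
set_option linter.unusedSectionVars false
open scoped Classical

variable {V : Type} [Fintype V]

/-- The restriction of a graph to edges inside `C`. -/
def resG (H : SimpleGraph V) (C : Finset V) : SimpleGraph V where
  Adj x y := H.Adj x y ∧ x ∈ C ∧ y ∈ C
  symm := ⟨fun _ _ h => ⟨h.1.symm, h.2.2, h.2.1⟩⟩
  loopless := ⟨fun _ h => h.1.ne rfl⟩

theorem reach_of_adj {A B : SimpleGraph V} (h : ∀ x y, A.Adj x y → B.Reachable x y)
    {x y : V} (hr : A.Reachable x y) : B.Reachable x y := by
  obtain ⟨p⟩ := hr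
  induction p with
  | nil => exact SimpleGraph.Reachable.refl _
  | cons hadj _ ih => exact (h _ _ hadj).trans ih

theorem closed_of_reach {A : SimpleGraph V} {P : V → Prop} (h : ∀ x y, A.Adj x y → P x → P y)
    {x y : V} (hr : A.Reachable x y) (hx : P x) : P y := by
  obtain ⟨p⟩ := hr
  induction p with
  | nil => exact hx
  | cons hadj _ ih => exact ih (h _ _ hadj hx)

theorem resG_mono {H : SimpleGraph V} {C C' : Finset V} (h : C ⊆ C') : resG H C ≤ resG H C' :=
  fun _ _ hh => ⟨hh.1, h hh.2.1, h hh.2.2⟩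

theorem path_split {R : SimpleGraph V} {a b v : V} (p : R.Walk a b) (hp : p.IsPath)
    (hv : v ∈ p.support) (hvb : v ≠ b) :
    ∃ v', R.Adj v v' ∧ (R.deleteEdges {s(v, v')}).Reachable a v ∧
      (R.deleteEdges {s(v, v')}).Reachable v' b := by
  have hnd := hp.isTrail.edges_nodup
  rw [← p.take_spec hv, SimpleGraph.Walk.edges_append] at hnd
  generalize p.takeUntil v hv = q at hnd
  generalize p.dropUntil v hv = r at hnd
  cases r with
  | nil => exact absurd rfl hvb
  | cons h r' =>
    rename_i v'
    rw [SimpleGraph.Walk.edges_cons, List.nodup_append] at hnd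
    obtain ⟨_, h2, h3⟩ := hnd
    rw [List.nodup_cons] at h2
    refine ⟨v', h, ⟨q.toDeleteEdges _ ?_⟩, ⟨r'.toDeleteEdges _ ?_⟩⟩
    · intro e he hee
      rw [Set.mem_singleton_iff] at hee
      exact h3 e he s(v, v') (by simp) hee
    · intro e he hee
      rw [Set.mem_singleton_iff] at hee
      subst hee
      exact h2.1 he

theorem reach_delete {R : SimpleGraph V} {a b v v' : V}
    (h1 : (R.deleteEdges {s(v, v')}).Reachable a v)
    (h2 : (R.deleteEdges {s(v, v')}).Reachable v' b) {x : V} (hx : R.Reachable a x) :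
    (R.deleteEdges {s(v, v')}).Reachable x a ∨ (R.deleteEdges {s(v, v')}).Reachable x b := by
  refine closed_of_reach (A := R) (P := fun x => (R.deleteEdges {s(v, v')}).Reachable x a ∨
    (R.deleteEdges {s(v, v')}).Reachable x b) ?_ hx (Or.inl (SimpleGraph.Reachable.refl _))
  intro x y hxy hP
  by_cases he : s(x, y) = s(v, v')
  · rw [Sym2.eq_iff] at he
    rcases he with ⟨rfl, rfl⟩ | ⟨rfl, rfl⟩
    · exact Or.inr h2
    · exact Or.inl h1.symm
  · have hadj : (R.deleteEdges {s(v, v')}).Adj y x := by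
      rw [SimpleGraph.deleteEdges_adj]
      refine ⟨hxy.symm, ?_⟩
      rw [Set.mem_singleton_iff, Sym2.eq_swap]
      exact he
    exact hP.imp (fun h => hadj.reachable.trans h) (fun h => hadj.reachable.trans h)

/-- `v` can be made to have degree at most `K - 2` by changing `H` inside `C` only. -/
def GoodV (G H : SimpleGraph V) (V0 : Finset V) (K : ℕ) (C : Finset V) (v : V) : Prop :=
  ∃ F : SimpleGraph V, F ≤ G ∧ (∀ x y, ¬ (x ∈ C ∧ y ∈ C) → (F.Adj x y ↔ H.Adj x y)) ∧
    (∀ x ∈ C, x ∈ V0 → (resG F C).Reachable x v) ∧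
    (∀ x ∈ C, F.degree x + 1 ≤ K) ∧ F.degree v + 2 ≤ K

/-- Blobs. -/
structure Blob (G H : SimpleGraph V) (V0 : Finset V) (K : ℕ) (C : Finset V) : Prop where
  ne : ∃ a ∈ C, a ∈ V0
  conn : ∀ x ∈ C, x ∈ V0 → ∀ y ∈ C, y ∈ V0 → (resG H C).Reachable x y
  deg : ∀ x ∈ C, H.degree x + 1 ≤ K
  good : ∀ v ∈ C, GoodV G H V0 K C v

theorem degree_le_of {A B : SimpleGraph V} {x : V} (h : ∀ y, A.Adj x y → B.Adj x y) :
    A.degree x ≤ B.degree x := by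
  rw [← SimpleGraph.card_neighborFinset_eq_degree, ← SimpleGraph.card_neighborFinset_eq_degree]
  apply Finset.card_le_card
  intro y hy
  rw [SimpleGraph.mem_neighborFinset] at *
  exact h y hy

theorem degree_le_succ_of {A B : SimpleGraph V} {x w : V} (h : ∀ y, A.Adj x y → B.Adj x y ∨ y = w) :
    A.degree x ≤ B.degree x + 1 := by
  rw [← SimpleGraph.card_neighborFinset_eq_degree, ← SimpleGraph.card_neighborFinset_eq_degree]
  refine le_trans (Finset.card_le_card (t := insert w (B.neighborFinset x)) ?_)
    (Finset.card_insert_le _ _)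
  intro y hy
  rw [Finset.mem_insert]
  rw [SimpleGraph.mem_neighborFinset] at *
  exact (h y hy).symm

theorem degree_lt_of {A B : SimpleGraph V} {x w : V} (h : ∀ y, A.Adj x y → B.Adj x y)
    (hw : B.Adj x w) (hw' : ¬ A.Adj x w) :
    A.degree x + 1 ≤ B.degree x := by
  rw [← SimpleGraph.card_neighborFinset_eq_degree, ← SimpleGraph.card_neighborFinset_eq_degree]
  apply Finset.card_lt_card
  rw [Finset.ssubset_iff_of_subset]
  · exact ⟨w, by simpa using hw, by simpa using hw'⟩
  · intro y hy
    rw [SimpleGraph.mem_neighborFinset] at *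
    exact h y hy

theorem GoodV.mono {G H : SimpleGraph V} {V0 : Finset V} {K : ℕ} {C C' : Finset V} {v : V}
    (hsupp : ∀ x y, H.Adj x y → x ∈ V0)
    (hg : GoodV G H V0 K C v) (hCC : C ⊆ C') (hne : ∃ a ∈ C, a ∈ V0)
    (hconn : ∀ x ∈ C', x ∈ V0 → ∀ y ∈ C', y ∈ V0 → (resG H C').Reachable x y)
    (hdeg : ∀ x ∈ C', H.degree x + 1 ≤ K) : GoodV G H V0 K C' v := by
  obtain ⟨F, hF, hag, hr, hd, hv⟩ := hg
  refine ⟨F, hF, fun x y h => hag x y (fun hh => h ⟨hCC hh.1, hCC hh.2⟩), ?_, ?_, hv⟩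
  · intro x hx hx0
    obtain ⟨a, ha, ha0⟩ := hne
    have h1 := hconn x hx hx0 a (hCC ha) ha0
    have h2 : (resG F C').Reachable x a := by
      refine reach_of_adj ?_ h1
      intro p q hpq
      by_cases hh : p ∈ C ∧ q ∈ C
      · exact ((hr p hh.1 (hsupp _ _ hpq.1)).trans
          (hr q hh.2 (hsupp _ _ hpq.1.symm)).symm).mono (resG_mono hCC)
      · have : (resG F C').Adj p q := ⟨(hag p q hh).2 hpq.1, hpq.2⟩
        exact this.reachable
    exact h2.trans ((hr a ha ha0).mono (resG_mono hCC))
  · intro x hx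
    by_cases hxC : x ∈ C
    · exact hd x hxC
    · refine le_trans ?_ (hdeg x hx)
      exact Nat.succ_le_succ (degree_le_of fun y hy => (hag x y (fun hh => hxC hh.1)).1 hy)

/-- Adding a vertex outside of the tree to a blob. -/
theorem Blob.add {G H : SimpleGraph V} {V0 : Finset V} {K : ℕ} {C : Finset V} (hK : 3 ≤ K)
    (hsupp : ∀ x y, H.Adj x y → x ∈ V0) (hC : Blob G H V0 K C) {u z : V} (hu : u ∈ C)
    (hz : z ∉ V0) (hzC : z ∉ C) (huz : G.Adj u z) : Blob G H V0 K (insert z C) := by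
  have hsub : C ⊆ insert z C := Finset.subset_insert _ _
  have hz0 : ∀ y, ¬ H.Adj z y := fun y h => hz (hsupp _ _ h)
  have key : ∀ x ∈ insert z C, x ∈ V0 → x ∈ C := by
    intro x hx hx0
    rcases Finset.mem_insert.1 hx with rfl | h
    · exact absurd hx0 hz
    · exact h
  have hconn : ∀ x ∈ insert z C, x ∈ V0 → ∀ y ∈ insert z C, y ∈ V0 →
      (resG H (insert z C)).Reachable x y := fun x hx hx0 y hy hy0 =>
    (hC.conn x (key x hx hx0) hx0 y (key y hy hy0) hy0).mono (resG_mono hsub)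
  have hdz : H.degree z = 0 := by
    have := degree_le_of (A := H) (B := ⊥) (x := z) (fun y h => absurd h (hz0 y))
    simpa using this
  have hdeg : ∀ x ∈ insert z C, H.degree x + 1 ≤ K := by
    intro x hx
    rcases Finset.mem_insert.1 hx with rfl | h
    · omega
    · exact hC.deg x h
  refine ⟨?_, hconn, hdeg, ?_⟩
  · obtain ⟨a, ha, ha0⟩ := hC.ne
    exact ⟨a, hsub ha, ha0⟩
  · intro v hv
    rcases Finset.mem_insert.1 hv with rfl | hvC
    · obtain ⟨F, hF, hag, hr, hd, hdu⟩ := hC.good u hu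
      have huv : u ≠ v := huz.ne
      have hFv : ∀ y, ¬ F.Adj v y := fun y h => hz0 y ((hag v y (fun hh => hzC hh.1)).1 h)
      obtain ⟨E, hadj⟩ : ∃ E : SimpleGraph V, ∀ x y, E.Adj x y ↔
          F.Adj x y ∨ (x = u ∧ y = v) ∨ (x = v ∧ y = u) := by
        refine ⟨F ⊔ SimpleGraph.edge u v, fun x y => ?_⟩
        rw [SimpleGraph.sup_adj, SimpleGraph.edge_adj]
        constructor
        · rintro (h | ⟨h, _⟩)
          · exact Or.inl h
          · right; tauto
        · rintro (h | h | h)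
          · exact Or.inl h
          · right; refine ⟨by tauto, ?_⟩; rw [h.1, h.2]; exact huv
          · right; refine ⟨by tauto, ?_⟩; rw [h.1, h.2]; exact huv.symm
      have hdv : E.degree v ≤ 1 := by
        have := degree_le_succ_of (A := E) (B := ⊥) (x := v) (w := u) ?_
        · simpa using this
        · intro y hy
          rw [hadj] at hy
          rcases hy with h | h | h
          · exact absurd h (hFv y)
          · exact absurd h.1.symm huv
          · exact Or.inr h.2
      refine ⟨E, ?_, ?_, ?_, ?_, ?_⟩
      · intro x y h
        rw [hadj] at h
        rcases h with h | ⟨rfl, rfl⟩ | ⟨rfl, rfl⟩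
        · exact hF h
        · exact huz
        · exact huz.symm
      · intro x y hxy
        rw [hadj, ← hag x y (fun hh => hxy ⟨hsub hh.1, hsub hh.2⟩)]
        constructor
        · rintro (h | ⟨rfl, rfl⟩ | ⟨rfl, rfl⟩)
          · exact h
          · exact absurd ⟨hsub hu, hv⟩ hxy
          · exact absurd ⟨hv, hsub hu⟩ hxy
        · exact Or.inl
      · intro x hx hx0
        have h1 := hr x (key x hx hx0) hx0
        have h2 : (resG E (insert v C)).Reachable x u := by
          refine h1.mono ?_
          intro p q h
          exact ⟨(hadj p q).2 (Or.inl h.1), hsub h.2.1, hsub h.2.2⟩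
        have h3 : (resG E (insert v C)).Adj u v :=
          ⟨(hadj u v).2 (Or.inr (Or.inl ⟨rfl, rfl⟩)), hsub hu, hv⟩
        exact h2.trans h3.reachable
      · intro x hx
        rcases Finset.mem_insert.1 hx with rfl | hxC
        · omega
        · by_cases hxu : x = u
          · subst hxu
            have := degree_le_succ_of (A := E) (B := F) (x := x) (w := v) ?_
            · omega
            · intro y hy
              rw [hadj] at hy
              rcases hy with h | h | h
              · exact Or.inl h
              · exact Or.inr h.2
              · exact absurd h.1 huv
          · refine le_trans (Nat.succ_le_succ (degree_le_of ?_)) (hd x hxC)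
            intro y hy
            rw [hadj] at hy
            rcases hy with h | h | h
            · exact h
            · exact absurd h.1 hxu
            · exact absurd (h.1 ▸ hxC) hzC
      · omega
    · exact (hC.good v hvC).mono hsupp hsub hC.ne hconn hdeg

/-- The exchange step. -/
theorem exchange {G H : SimpleGraph V} {V0 : Finset V} {K : ℕ} {C1 C2 C' : Finset V}
    (hHG : H ≤ G)
    (hsupp : ∀ x y, H.Adj x y → x ∈ V0) (hB1 : Blob G H V0 K C1) (hB2 : Blob G H V0 K C2)
    (hdis : Disjoint C1 C2) (h1' : C1 ⊆ C') (h2' : C2 ⊆ C')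
    {u w a1 a2 v : V} (hu : u ∈ C1) (hw : w ∈ C2) (huw : G.Adj u w)
    (ha1 : a1 ∈ C1) (ha10 : a1 ∈ V0) (ha2 : a2 ∈ C2) (ha20 : a2 ∈ V0)
    (p : (resG H C').Walk a1 a2) (hp : p.IsPath) (hvp : v ∈ p.support)
    (hv1 : v ∉ C1) (hv2 : v ∉ C2)
    (hconn : ∀ x ∈ C', x ∈ V0 → (resG H C').Reachable a1 x) :
    ∃ F : SimpleGraph V, F ≤ G ∧ (∀ x y, ¬ (x ∈ C' ∧ y ∈ C') → (F.Adj x y ↔ H.Adj x y)) ∧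
      (∀ x ∈ C', x ∈ V0 → (resG F C').Reachable x a1) ∧
      (∀ x, x ∈ C1 ∨ x ∈ C2 → F.degree x + 1 ≤ K) ∧
      (∀ x, x ∉ C1 → x ∉ C2 → F.degree x ≤ H.degree x) ∧
      F.degree v + 1 ≤ H.degree v := by
  obtain ⟨v', hvv', hr1, hr2⟩ := path_split p hp hvp (fun h => hv2 (h ▸ ha2))
  obtain ⟨F1, hF1, hag1, hre1, hd1, hdu⟩ := hB1.good u hu
  obtain ⟨F2, hF2, hag2, hre2, hd2, hdw⟩ := hB2.good w hw
  have hd12 : ∀ x, x ∈ C1 → x ∉ C2 := fun x h => Finset.disjoint_left.1 hdis h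
  let F : SimpleGraph V :=
    { Adj := fun x y => (x ∈ C1 ∧ y ∈ C1 ∧ F1.Adj x y) ∨ (x ∈ C2 ∧ y ∈ C2 ∧ F2.Adj x y) ∨
        (¬ (x ∈ C1 ∧ y ∈ C1) ∧ ¬ (x ∈ C2 ∧ y ∈ C2) ∧ H.Adj x y ∧ s(x, y) ≠ s(v, v')) ∨
        (x = u ∧ y = w) ∨ (x = w ∧ y = u)
      symm := ⟨by
        intro x y h
        rcases h with h | h | h | h | h
        · exact Or.inl ⟨h.2.1, h.1, h.2.2.symm⟩
        · exact Or.inr (Or.inl ⟨h.2.1, h.1, h.2.2.symm⟩)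
        · refine Or.inr (Or.inr (Or.inl ⟨fun hh => h.1 hh.symm, fun hh => h.2.1 hh.symm,
            h.2.2.1.symm, ?_⟩))
          rw [Sym2.eq_swap]
          exact h.2.2.2
        · exact Or.inr (Or.inr (Or.inr (Or.inr ⟨h.2, h.1⟩)))
        · exact Or.inr (Or.inr (Or.inr (Or.inl ⟨h.2, h.1⟩)))⟩
      loopless := ⟨by
        intro x h
        rcases h with h | h | h | h | h
        · exact h.2.2.ne rfl
        · exact h.2.2.ne rfl
        · exact h.2.2.1.ne rfl
        · exact huw.ne (h.1.symm.trans h.2)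
        · exact huw.ne (h.2.symm.trans h.1)⟩ }
  have hFadj : ∀ x y, F.Adj x y ↔ (x ∈ C1 ∧ y ∈ C1 ∧ F1.Adj x y) ∨ (x ∈ C2 ∧ y ∈ C2 ∧ F2.Adj x y) ∨
        (¬ (x ∈ C1 ∧ y ∈ C1) ∧ ¬ (x ∈ C2 ∧ y ∈ C2) ∧ H.Adj x y ∧ s(x, y) ≠ s(v, v')) ∨
        (x = u ∧ y = w) ∨ (x = w ∧ y = u) := fun x y => Iff.rfl
  have hle1 : resG F1 C1 ≤ resG F C' := fun x y h =>
    ⟨(hFadj x y).2 (Or.inl ⟨h.2.1, h.2.2, h.1⟩), h1' h.2.1, h1' h.2.2⟩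
  have hle2 : resG F2 C2 ≤ resG F C' := fun x y h =>
    ⟨(hFadj x y).2 (Or.inr (Or.inl ⟨h.2.1, h.2.2, h.1⟩)), h2' h.2.1, h2' h.2.2⟩
  have hc : ∀ x y, ((resG H C').deleteEdges {s(v, v')}).Adj x y → (resG F C').Reachable x y := by
    intro x y h
    rw [SimpleGraph.deleteEdges_adj, Set.mem_singleton_iff] at h
    obtain ⟨⟨hH, hx, hy⟩, hne⟩ := h
    have hx0 := hsupp _ _ hH
    have hy0 := hsupp _ _ hH.symm
    by_cases hh1 : x ∈ C1 ∧ y ∈ C1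
    · exact ((hre1 x hh1.1 hx0).trans (hre1 y hh1.2 hy0).symm).mono hle1
    by_cases hh2 : x ∈ C2 ∧ y ∈ C2
    · exact ((hre2 x hh2.1 hx0).trans (hre2 y hh2.2 hy0).symm).mono hle2
    have : (resG F C').Adj x y :=
      ⟨(hFadj x y).2 (Or.inr (Or.inr (Or.inl ⟨hh1, hh2, hH, hne⟩))), hx, hy⟩
    exact this.reachable
  have ha21 : (resG F C').Reachable a2 a1 := by
    have e1 := (hre1 a1 ha1 ha10).mono hle1
    have e2 := (hre2 a2 ha2 ha20).mono hle2
    have e3 : (resG F C').Adj w u :=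
      ⟨(hFadj w u).2 (by simp), h2' hw, h1' hu⟩
    exact e2.trans (e3.reachable.trans e1.symm)
  have hdegH : ∀ x, x ∉ C1 → x ∉ C2 → ∀ y, F.Adj x y → H.Adj x y ∧ s(x, y) ≠ s(v, v') := by
    intro x hx1 hx2 y h
    rw [hFadj] at h
    rcases h with h | h | h | h | h
    · exact absurd h.1 hx1
    · exact absurd h.1 hx2
    · exact h.2.2
    · exact absurd (h.1 ▸ hu) hx1
    · exact absurd (h.1 ▸ hw) hx2
  refine ⟨F, ?_, ?_, ?_, ?_, ?_, ?_⟩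
  · intro x y h
    rw [hFadj] at h
    rcases h with h | h | h | h | h
    · exact hF1 h.2.2
    · exact hF2 h.2.2
    · exact hHG h.2.2.1
    · rw [h.1, h.2]; exact huw
    · rw [h.1, h.2]; exact huw.symm
  · intro x y hxy
    rw [hFadj]
    constructor
    · rintro (h | h | h | h | h)
      · exact absurd ⟨h1' h.1, h1' h.2.1⟩ hxy
      · exact absurd ⟨h2' h.1, h2' h.2.1⟩ hxy
      · exact h.2.2.1
      · exact absurd ⟨h.1 ▸ h1' hu, h.2 ▸ h2' hw⟩ hxy
      · exact absurd ⟨h.1 ▸ h2' hw, h.2 ▸ h1' hu⟩ hxy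
    · intro h
      refine Or.inr (Or.inr (Or.inl ⟨fun hh => hxy ⟨h1' hh.1, h1' hh.2⟩,
        fun hh => hxy ⟨h2' hh.1, h2' hh.2⟩, h, ?_⟩))
      intro he
      rw [Sym2.eq_iff] at he
      rcases he with ⟨rfl, rfl⟩ | ⟨rfl, rfl⟩
      · exact hxy hvv'.2
      · exact hxy hvv'.2.symm
  · intro x hx hx0
    rcases reach_delete hr1 hr2 (hconn x hx hx0) with h | h
    · exact reach_of_adj hc h
    · exact (reach_of_adj hc h).trans ha21
  · rintro x (hx | hx)
    · have hsub : ∀ y, F.Adj x y → F1.Adj x y ∨ (x = u ∧ y = w) := by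
        intro y h
        rw [hFadj] at h
        rcases h with h | h | h | h | h
        · exact Or.inl h.2.2
        · exact absurd h.1 (hd12 x hx)
        · exact Or.inl ((hag1 x y h.1).2 h.2.2.1)
        · exact Or.inr h
        · exact absurd (h.1 ▸ hw) (hd12 x hx)
      by_cases hxu : x = u
      · have := degree_le_succ_of (A := F) (B := F1) (x := x) (w := w)
          (fun y h => (hsub y h).imp id And.right)
        rw [← hxu] at hdu
        omega
      · have := degree_le_of (A := F) (B := F1) (x := x)
          (fun y h => (hsub y h).resolve_right (fun hh => hxu hh.1))
        have := hd1 x hx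
        omega
    · have hsub : ∀ y, F.Adj x y → F2.Adj x y ∨ (x = w ∧ y = u) := by
        intro y h
        rw [hFadj] at h
        rcases h with h | h | h | h | h
        · exact absurd hx (hd12 x h.1)
        · exact Or.inl h.2.2
        · exact Or.inl ((hag2 x y h.2.1).2 h.2.2.1)
        · exact absurd hx (hd12 x (h.1 ▸ hu))
        · exact Or.inr h
      by_cases hxu : x = w
      · have := degree_le_succ_of (A := F) (B := F2) (x := x) (w := u)
          (fun y h => (hsub y h).imp id And.right)
        rw [← hxu] at hdw
        omega
      · have := degree_le_of (A := F) (B := F2) (x := x)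
          (fun y h => (hsub y h).resolve_right (fun hh => hxu hh.1))
        have := hd2 x hx
        omega
  · intro x hx1 hx2
    exact degree_le_of fun y h => (hdegH x hx1 hx2 y h).1
  · exact degree_lt_of (fun y h => (hdegH v hv1 hv2 y h).1) hvv'.1
      (fun h => (hdegH v hv1 hv2 v' h).2 rfl)

/-- Total excess of degrees over `K - 1`. -/
noncomputable def excess (K : ℕ) (H : SimpleGraph V) : ℕ := ∑ v, (H.degree v + 1 - K)

theorem merge {G H : SimpleGraph V} {X : Set V} {x0 : V} {V0 : Finset V} {K : ℕ}
    (hHG : H ≤ G) (hV0 : ∀ v, v ∈ V0 ↔ H.Reachable x0 v)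
    (hsupp : ∀ x y, H.Adj x y → x ∈ V0) (hXr : ∀ x ∈ X, H.Reachable x0 x)
    (hexc : ∀ F : SimpleGraph V, F ≤ G → (∀ x ∈ X, F.Reachable x0 x) → excess K H ≤ excess K F)
    (Fm : Finset (Finset V)) (hbl : ∀ C ∈ Fm, Blob G H V0 K C)
    (hdj : ∀ C ∈ Fm, ∀ D ∈ Fm, C ≠ D → Disjoint C D)
    {C1 C2 : Finset V} (h1 : C1 ∈ Fm) (h2 : C2 ∈ Fm) (hne : C1 ≠ C2) {u w : V}
    (hu : u ∈ C1) (hw : w ∈ C2) (huw : G.Adj u w) :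
    ∃ C', Blob G H V0 K C' ∧ C1 ⊆ C' ∧ C2 ⊆ C' ∧ ∀ C ∈ Fm, C ⊆ C' ∨ Disjoint C C' := by
  obtain ⟨a1, ha1, ha10⟩ := (hbl C1 h1).ne
  obtain ⟨a2, ha2, ha20⟩ := (hbl C2 h2).ne
  obtain ⟨p, hp⟩ := (((hV0 a1).1 ha10).symm.trans ((hV0 a2).1 ha20)).exists_isPath
  have hsuppV0 : ∀ m ∈ p.support, m ∈ V0 := fun m hm =>
    (hV0 m).2 (((hV0 a1).1 ha10).trans ⟨p.takeUntil m hm⟩)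
  obtain ⟨C', hC'⟩ : ∃ C' : Finset V, ∀ x, x ∈ C' ↔
      x ∈ p.support ∨ ∃ C ∈ Fm, (∃ m ∈ C, m ∈ p.support) ∧ x ∈ C := by
    refine ⟨Finset.univ.filter (fun x => x ∈ p.support ∨
      ∃ C ∈ Fm, (∃ m ∈ C, m ∈ p.support) ∧ x ∈ C), fun x => by simp⟩
  have hsubF : ∀ C ∈ Fm, (∃ m ∈ C, m ∈ p.support) → C ⊆ C' := fun C hC hm x hx =>
    (hC' x).2 (Or.inr ⟨C, hC, hm, hx⟩)
  have h1' : C1 ⊆ C' := hsubF C1 h1 ⟨a1, ha1, p.start_mem_support⟩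
  have h2' : C2 ⊆ C' := hsubF C2 h2 ⟨a2, ha2, p.end_mem_support⟩
  have htr : ∀ e ∈ p.edges, e ∈ (resG H C').edgeSet := by
    intro e he
    induction e with
    | h x y =>
      refine ⟨p.adj_of_mem_edges he, ?_, ?_⟩
      · exact (hC' _).2 (Or.inl (p.fst_mem_support_of_mem_edges he))
      · exact (hC' _).2 (Or.inl (p.snd_mem_support_of_mem_edges he))
  have hq : ∃ q : (resG H C').Walk a1 a2, q.IsPath ∧ q.support = p.support :=
    ⟨p.transfer _ htr, hp.transfer htr, p.support_transfer htr⟩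
  obtain ⟨q, hqp, hqs⟩ := hq
  have hconn1 : ∀ x ∈ C', x ∈ V0 → (resG H C').Reachable a1 x := by
    intro x hx hx0
    have hps : ∀ m ∈ p.support, (resG H C').Reachable a1 m := fun m hm =>
      ⟨q.takeUntil m (hqs ▸ hm)⟩
    rcases (hC' x).1 hx with h | ⟨C, hC, ⟨m, hmC, hmp⟩, hxC⟩
    · exact hps x h
    · exact (hps m hmp).trans (((hbl C hC).conn m hmC (hsuppV0 m hmp) x hxC hx0).mono
        (resG_mono (hsubF C hC ⟨m, hmC, hmp⟩)))
  have hconn : ∀ x ∈ C', x ∈ V0 → ∀ y ∈ C', y ∈ V0 → (resG H C').Reachable x y :=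
    fun x hx hx0 y hy hy0 => (hconn1 x hx hx0).symm.trans (hconn1 y hy hy0)
  have hex := fun v (hv : v ∈ p.support) (hv1 : v ∉ C1) (hv2 : v ∉ C2) =>
    exchange hHG hsupp (hbl C1 h1) (hbl C2 h2) (hdj C1 h1 C2 h2 hne) h1' h2' hu hw huw ha1 ha10
      ha2 ha20 q hqp (v := v) (hqs ▸ hv) hv1 hv2 hconn1
  have hdegp : ∀ v ∈ p.support, H.degree v + 1 ≤ K := by
    intro v hv
    by_cases hv1 : v ∈ C1
    · exact (hbl C1 h1).deg v hv1
    by_cases hv2 : v ∈ C2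
    · exact (hbl C2 h2).deg v hv2
    obtain ⟨F, hF, hag, hr, hd12, hdo, hdv⟩ := hex v hv hv1 hv2
    by_contra hcon
    have hle : excess K H ≤ excess K F := by
      apply hexc F hF
      intro x hx
      refine reach_of_adj ?_ (hXr x hx)
      intro x y hxy
      by_cases hh : x ∈ C' ∧ y ∈ C'
      · exact ((hr x hh.1 (hsupp _ _ hxy)).trans (hr y hh.2 (hsupp _ _ hxy.symm)).symm).mono
          (fun x y (h : (resG F C').Adj x y) => h.1)
      · exact ((hag x y hh).2 hxy).reachable
    have hlt : excess K F < excess K H := by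
      unfold excess
      apply Finset.sum_lt_sum
      · intro x _
        by_cases hx : x ∈ C1 ∨ x ∈ C2
        · have := hd12 x hx
          omega
        · push Not at hx
          have := hdo x hx.1 hx.2
          omega
      · exact ⟨v, Finset.mem_univ _, by omega⟩
    omega
  have hdeg : ∀ x ∈ C', H.degree x + 1 ≤ K := by
    intro x hx
    rcases (hC' x).1 hx with h | ⟨C, hC, _, hxC⟩
    · exact hdegp x h
    · exact (hbl C hC).deg x hxC
  have hmonoC : ∀ C ∈ Fm, (∃ m ∈ C, m ∈ p.support) → ∀ v ∈ C, GoodV G H V0 K C' v :=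
    fun C hC hm v hv => ((hbl C hC).good v hv).mono hsupp (hsubF C hC hm) (hbl C hC).ne hconn hdeg
  refine ⟨C', ⟨⟨a1, h1' ha1, ha10⟩, hconn, hdeg, ?_⟩, h1', h2', ?_⟩
  · intro v hv
    rcases (hC' v).1 hv with h | ⟨C, hC, hm, hxC⟩
    · by_cases hv1 : v ∈ C1
      · exact hmonoC C1 h1 ⟨a1, ha1, p.start_mem_support⟩ v hv1
      by_cases hv2 : v ∈ C2
      · exact hmonoC C2 h2 ⟨a2, ha2, p.end_mem_support⟩ v hv2
      obtain ⟨F, hF, hag, hr, hd12, hdo, hdv⟩ := hex v h hv1 hv2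
      have := hdegp v h
      refine ⟨F, hF, hag, fun x hx hx0 => (hr x hx hx0).trans (hr v hv (hsuppV0 v h)).symm, ?_, ?_⟩
      · intro x hx
        by_cases hxx : x ∈ C1 ∨ x ∈ C2
        · exact hd12 x hxx
        · push Not at hxx
          have := hdo x hxx.1 hxx.2
          have := hdeg x hx
          omega
      · omega
    · exact hmonoC C hC hm v hxC
  · intro C hC
    by_cases hm : ∃ m ∈ C, m ∈ p.support
    · exact Or.inl (hsubF C hC hm)
    · right
      rw [Finset.disjoint_left]
      intro x hx hx'
      rcases (hC' x).1 hx' with h | ⟨D, hD, hmD, hxD⟩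
      · exact hm ⟨x, hx, h⟩
      · have hCD : C ≠ D := by
          rintro rfl
          exact hm hmD
        exact Finset.disjoint_left.1 (hdj C hC D hD hCD) hx hxD

/-- A closed family of blobs. -/
theorem exists_family {G H : SimpleGraph V} {X : Set V} {x0 : V} {V0 : Finset V} {K : ℕ}
    (hK : 3 ≤ K)
    (hHG : H ≤ G) (hV0 : ∀ v, v ∈ V0 ↔ H.Reachable x0 v)
    (hsupp : ∀ x y, H.Adj x y → x ∈ V0) (hXr : ∀ x ∈ X, H.Reachable x0 x)
    (hexc : ∀ F : SimpleGraph V, F ≤ G → (∀ x ∈ X, F.Reachable x0 x) → excess K H ≤ excess K F) :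
    ∃ Fm : Finset (Finset V), (∀ C ∈ Fm, Blob G H V0 K C) ∧
      (∀ C ∈ Fm, ∀ D ∈ Fm, C ≠ D → Disjoint C D) ∧
      (∀ v ∈ V0, H.degree v + 2 ≤ K → ∃ C ∈ Fm, v ∈ C) ∧
      (∀ C ∈ Fm, ∀ u ∈ C, ∀ w, G.Adj u w → w ∉ C → w ∈ V0 ∧ ∀ D ∈ Fm, w ∉ D) := by
  let S : Set (Finset (Finset V)) := {Fm | (∀ C ∈ Fm, Blob G H V0 K C) ∧
      (∀ C ∈ Fm, ∀ D ∈ Fm, C ≠ D → Disjoint C D)}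
  obtain ⟨Fm, ⟨hbl, hdj⟩, hmin⟩ := Set.exists_min_image S
    (fun Fm => toLex (((Fm.biUnion id)ᶜ).card, Fm.card)) (Set.toFinite _)
    ⟨∅, by simp [S]⟩
  -- replacing the members that meet a new blob
  have step : ∀ C', Blob G H V0 K C' → (∀ C ∈ Fm, C ⊆ C' ∨ Disjoint C C') →
      (∀ x ∈ C', ∃ C ∈ Fm, x ∈ C) ∧
      ∀ C1 ∈ Fm, ∀ C2 ∈ Fm, C1 ≠ C2 → C1 ⊆ C' → C2 ⊆ C' → False := by
    intro C' hb hsep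
    have hneC : ∀ C ∈ Fm, ∃ a, a ∈ C := fun C hC => (hbl C hC).ne.imp fun a h => h.1
    obtain ⟨Fn, hFn⟩ : ∃ Fn : Finset (Finset V),
      Fn = insert C' (Fm.filter (fun C => Disjoint C C')) := ⟨_, rfl⟩
    have hS : Fn ∈ S := by
      subst hFn
      constructor
      · intro C hC
        rcases Finset.mem_insert.1 hC with rfl | h
        · exact hb
        · exact hbl C (Finset.mem_filter.1 h).1
      · intro C hC D hD hCD
        rcases Finset.mem_insert.1 hC with rfl | h
        · rcases Finset.mem_insert.1 hD with rfl | h'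
          · exact absurd rfl hCD
          · exact (Finset.mem_filter.1 h').2.symm
        · rcases Finset.mem_insert.1 hD with rfl | h'
          · exact (Finset.mem_filter.1 h).2
          · exact hdj C (Finset.mem_filter.1 h).1 D (Finset.mem_filter.1 h').1 hCD
    have hle := hmin Fn hS
    have hsub : Fm.biUnion id ⊆ Fn.biUnion id := by
      intro x hx
      rw [Finset.mem_biUnion] at hx ⊢
      obtain ⟨C, hC, hxC⟩ := hx
      subst hFn
      rcases hsep C hC with h | h
      · exact ⟨C', Finset.mem_insert_self _ _, h hxC⟩
      · exact ⟨C, Finset.mem_insert_of_mem (Finset.mem_filter.2 ⟨hC, h⟩), hxC⟩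
    have hcsub : (Fn.biUnion id)ᶜ ⊆ (Fm.biUnion id)ᶜ := Finset.compl_subset_compl.2 hsub
    rw [Prod.Lex.toLex_le_toLex] at hle
    have hcard := Finset.card_le_card hcsub
    have hle2 : ((Fm.biUnion id)ᶜ).card = ((Fn.biUnion id)ᶜ).card ∧ Fm.card ≤ Fn.card := by
      rcases hle with h | h
      · simp only at h
        omega
      · exact h
    constructor
    · intro x hx
      by_contra hcon
      have hx1 : x ∈ (Fm.biUnion id)ᶜ := by
        rw [Finset.mem_compl, Finset.mem_biUnion]
        exact hcon
      rw [← Finset.eq_of_subset_of_card_le hcsub hle2.1.le, Finset.mem_compl,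
        Finset.mem_biUnion] at hx1
      exact hx1 ⟨C', by rw [hFn]; exact Finset.mem_insert_self _ _, hx⟩
    · intro C1 hC1 C2 hC2 hne h1 h2
      have hnd : ∀ C ∈ Fm, C ⊆ C' → ¬ Disjoint C C' := by
        intro C hC hs hd
        obtain ⟨a, ha⟩ := hneC C hC
        exact Finset.disjoint_left.1 hd ha (hs ha)
      have e1 : Fn.card ≤ (Fm.filter (fun C => Disjoint C C')).card + 1 := by
        rw [hFn]
        exact Finset.card_insert_le _ _
      have e2 : Fm.filter (fun C => Disjoint C C') ⊆ (Fm.erase C1).erase C2 := by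
        intro C hC
        rw [Finset.mem_filter] at hC
        rw [Finset.mem_erase, Finset.mem_erase]
        refine ⟨?_, ?_, hC.1⟩
        · rintro rfl
          exact hnd _ hC2 h2 hC.2
        · rintro rfl
          exact hnd _ hC1 h1 hC.2
      have e3 := Finset.card_le_card e2
      have e4 : C2 ∈ Fm.erase C1 := Finset.mem_erase.2 ⟨hne.symm, hC2⟩
      have e5 := Finset.card_erase_add_one e4
      have e6 := Finset.card_erase_add_one hC1
      omega
  refine ⟨Fm, hbl, hdj, ?_, ?_⟩
  · intro v hv hd
    by_contra hcon
    push Not at hcon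
    have hb : Blob G H V0 K {v} := by
      refine ⟨⟨v, by simp, hv⟩, ?_, ?_, ?_⟩
      · intro x hx _ y hy _
        rw [Finset.mem_singleton] at hx hy
        rw [hx, hy]
      · intro x hx
        rw [Finset.mem_singleton] at hx
        subst hx
        omega
      · intro x hx
        rw [Finset.mem_singleton] at hx
        subst hx
        refine ⟨H, hHG, fun _ _ _ => Iff.rfl, ?_, ?_, hd⟩
        · intro y hy _
          rw [Finset.mem_singleton] at hy
          rw [hy]
        · intro y hy
          rw [Finset.mem_singleton] at hy
          subst hy
          omega
    obtain ⟨C, hC, hvC⟩ := (step {v} hb (fun C hC => Or.inr (by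
      rw [Finset.disjoint_singleton_right]; exact hcon C hC))).1 v (by simp)
    exact hcon C hC hvC
  · intro C hC u hu w huw hwC
    have hnF : ∀ D ∈ Fm, w ∉ D := by
      intro D hD hwD
      have hCD : C ≠ D := by
        rintro rfl
        exact hwC hwD
      obtain ⟨C', hb, hc1, hc2, hsep⟩ := merge hHG hV0 hsupp hXr hexc Fm hbl hdj hC hD hCD hu hwD huw
      exact (step C' hb hsep).2 C hC D hD hCD hc1 hc2
    refine ⟨?_, hnF⟩
    by_contra hw0
    have hb := (hbl C hC).add hK hsupp hu hw0 hwC huw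
    obtain ⟨D, hD, hwD⟩ := (step _ hb (fun D hD => by
      by_cases hDC : D = C
      · left
        rw [hDC]
        exact Finset.subset_insert _ _
      · right
        rw [Finset.disjoint_insert_right]
        exact ⟨hnF D hD, hdj D hD C hC hDC⟩)).1 w (Finset.mem_insert_self _ _)
    exact hnF D hD hwD

theorem induce_reach {R : SimpleGraph V} {A : Finset V} {x y : V}
    (h : (resG R A).Reachable x y) (hx : x ∈ A) (hy : y ∈ A) :
    (R.induce (A : Set V)).Reachable ⟨x, hx⟩ ⟨y, hy⟩ := by
  obtain ⟨p⟩ := h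
  induction p with
  | nil => exact SimpleGraph.Reachable.refl _
  | cons hadj _ ih =>
    rename_i a b c _
    have : (R.induce (A : Set V)).Adj ⟨a, hx⟩ ⟨b, hadj.2.2⟩ := hadj.1
    exact this.reachable.trans (ih hadj.2.2 hy)

theorem sum_induce {R : SimpleGraph V} {A : Finset V} :
    ∑ x : (A : Set V), (R.induce (A : Set V)).degree x = 2 * (R.induce (A : Set V)).edgeFinset.card :=
  SimpleGraph.sum_degrees_eq_twice_card_edges _

theorem induce_degree_le (R : SimpleGraph V) (A : Finset V) (x : (A : Set V)) :
    (R.induce (A : Set V)).degree x ≤ R.degree x := by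
  rw [← SimpleGraph.card_neighborFinset_eq_degree, ← SimpleGraph.card_neighborFinset_eq_degree]
  refine Finset.card_le_card_of_injOn Subtype.val ?_ Subtype.val_injective.injOn
  intro y hy
  simpa using hy

theorem degree_le_induce (R : SimpleGraph V) (A : Finset V) (x : (A : Set V))
    (h : ∀ y, R.Adj x y → y ∈ A) :
    R.degree x ≤ (R.induce (A : Set V)).degree x := by
  rw [← SimpleGraph.card_neighborFinset_eq_degree, ← SimpleGraph.card_neighborFinset_eq_degree]
  refine le_trans (Finset.card_le_card (t := ((R.induce (A : Set V)).neighborFinset x).image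
    Subtype.val) ?_) Finset.card_image_le
  intro y hy
  rw [SimpleGraph.mem_neighborFinset] at hy
  rw [Finset.mem_image]
  exact ⟨⟨y, h y hy⟩, by simpa using hy, rfl⟩

theorem two_card_le {R : SimpleGraph V} {A : Finset V} (hne : A.Nonempty)
    (hc : ∀ x ∈ A, ∀ y ∈ A, (resG R A).Reachable x y) :
    2 * A.card ≤ ∑ x ∈ A, R.degree x + 2 := by
  have hcon : (R.induce (A : Set V)).Connected := by
    haveI : Nonempty (A : Set V) := ⟨⟨hne.choose, hne.choose_spec⟩⟩
    exact ⟨fun x y => induce_reach (hc x x.2 y y.2) x.2 y.2⟩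
  have h1 := hcon.card_vert_le_card_edgeSet_add_one
  have h2 := sum_induce (R := R) (A := A)
  have h3 : ∑ x : (A : Set V), (R.induce (A : Set V)).degree x ≤ ∑ x : (A : Set V), R.degree x :=
    Finset.sum_le_sum fun x _ => induce_degree_le R A x
  have h4 : ∑ x : (A : Set V), R.degree x = ∑ x ∈ A, R.degree x :=
    Finset.sum_coe_sort A (fun x => R.degree x)
  have h5 : Nat.card (A : Set V) = A.card := by simp
  rw [Nat.card_eq_fintype_card (α := (R.induce (A : Set V)).edgeSet),
    ← SimpleGraph.edgeFinset_card] at h1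
  omega

theorem tree_sum {R : SimpleGraph V} {A : Finset V} (hA : ∀ x y, R.Adj x y → x ∈ A)
    (ht : (R.induce (A : Set V)).IsTree) :
    ∑ x ∈ A, R.degree x + 2 ≤ 2 * A.card := by
  have h1 := ht.card_edgeFinset
  have h2 := sum_induce (R := R) (A := A)
  have h3 : ∑ x : (A : Set V), R.degree x ≤ ∑ x : (A : Set V), (R.induce (A : Set V)).degree x :=
    Finset.sum_le_sum fun x _ => degree_le_induce R A x (fun y hy => hA _ _ hy.symm)
  have h4 : ∑ x : (A : Set V), R.degree x = ∑ x ∈ A, R.degree x :=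
    Finset.sum_coe_sort A (fun x => R.degree x)
  have h5 : Fintype.card (A : Set V) = A.card := by simp
  omega

theorem le_compCount {G : SimpleGraph V} {X : Set V} (B : Finset V) (Fm : Finset (Finset V))
    (hdj : ∀ C ∈ Fm, ∀ D ∈ Fm, C ≠ D → Disjoint C D)
    (hX : ∀ C ∈ Fm, ∃ x ∈ C, x ∈ X) (hB : ∀ C ∈ Fm, Disjoint C B)
    (hcl : ∀ C ∈ Fm, ∀ u ∈ C, ∀ w, w ∉ B → G.Adj u w → w ∈ C) :
    Fm.card ≤ compCount G (B : Set V) X := by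
  by_cases hne : Fm.Nonempty
  swap
  · rw [Finset.not_nonempty_iff_eq_empty.1 hne]
    simp
  obtain ⟨C0, hC0⟩ := hne
  haveI : Nonempty V := ⟨(hX C0 hC0).choose⟩
  choose! f hf hfX using hX
  let R := resG G Bᶜ
  let Γ : Finset V → Finset V := fun C => Finset.univ.filter (fun y => R.Reachable (f C) y)
  have hΓ : ∀ C y, y ∈ Γ C ↔ R.Reachable (f C) y := fun C y => by simp [Γ]
  have hsub : ∀ C ∈ Fm, Γ C ⊆ C := by
    intro C hC y hy
    refine closed_of_reach (A := R) (P := fun y => y ∈ C) ?_ ((hΓ C y).1 hy) (hf C hC)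
    intro a b hab ha
    exact hcl C hC a ha b (Finset.mem_compl.1 hab.2.2) hab.1
  have hself : ∀ C, f C ∈ Γ C := fun C => (hΓ C _).2 (SimpleGraph.Reachable.refl _)
  have hinB : ∀ C ∈ Fm, ∀ y ∈ C, y ∉ B := fun C hC y hy => Finset.disjoint_left.1 (hB C hC) hy
  unfold compCount
  rw [← Set.ncard_coe_finset]
  refine Set.ncard_le_ncard_of_injOn (fun C => (Γ C : Set V)) ?_ ?_ (Set.toFinite _)
  · intro C hC
    have hC : C ∈ Fm := hC
    refine ⟨⟨?_, ⟨f C, hself C⟩, ?_, ?_⟩, ⟨f C, hself C, hfX C hC⟩⟩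
    · intro y hy
      exact hinB C hC y (hsub C hC hy)
    · haveI : Nonempty ((Γ C : Finset V) : Set V) := ⟨⟨f C, hself C⟩⟩
      have key : ∀ y, R.Reachable (f C) y → (resG G (Γ C)).Reachable (f C) y := by
        intro y hy
        refine (closed_of_reach (A := R) (P := fun y => R.Reachable (f C) y ∧
          (resG G (Γ C)).Reachable (f C) y) ?_ hy
          ⟨SimpleGraph.Reachable.refl _, SimpleGraph.Reachable.refl _⟩).2
        intro a b hab ha
        have hb : R.Reachable (f C) b := ha.1.trans hab.reachable
        have : (resG G (Γ C)).Adj a b := ⟨hab.1, (hΓ C a).2 ha.1, (hΓ C b).2 hb⟩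
        exact ⟨hb, ha.2.trans this.reachable⟩
      refine ⟨fun x y => ?_⟩
      exact induce_reach (((key x ((hΓ C x).1 x.2))).symm.trans (key y ((hΓ C y).1 y.2))) x.2 y.2
    · intro u hu v hv huv
      have hu' := (hΓ C u).1 hu
      have : R.Adj u v := ⟨huv, Finset.mem_compl.2 (hinB C hC u (hsub C hC hu)),
        Finset.mem_compl.2 hv⟩
      exact (hΓ C v).2 (hu'.trans this.reachable)
  · intro C hC D hD hCD
    have hC : C ∈ Fm := hC
    have hD : D ∈ Fm := hD
    by_contra hne
    have h1 : f C ∈ (Γ D : Set V) := by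
      have : (Γ C : Set V) = (Γ D : Set V) := hCD
      rw [← this]
      exact hself C
    exact Finset.disjoint_left.1 (hdj C hC D hD hne) (hf C hC) (hsub D hD h1)

theorem main_aux (G : SimpleGraph V) (φ : ℝ) (hφ : 0 < φ)
    (X : Set V) (x0 : V) (hx0 : x0 ∈ X) (hX : IsTough G X φ) :
    ∃ T : G.Subgraph, X ⊆ T.verts ∧ T.coe.IsTree ∧
      ∀ v ∈ T.verts, ((T.neighborSet v).ncard : ℝ) ≤ 2 / φ + 3 := by
  have hpos : 0 < 2 / φ := by positivity
  obtain ⟨K, hKdef⟩ : ∃ K : ℕ, K = ⌊2 / φ + 3⌋₊ + 1 := ⟨_, rfl⟩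
  have hKlt : 2 / φ + 3 < K := by
    rw [hKdef]; push_cast; exact Nat.lt_floor_add_one _
  have hKle : ((K : ℝ) - 1) ≤ 2 / φ + 3 := by
    rw [hKdef]; push_cast; simpa using Nat.floor_le (by positivity)
  have hK4 : 4 ≤ K := by
    have : (3 : ℝ) < K := by linarith
    exact_mod_cast this
  -- `X` lies in one component
  have hGX : ∀ x ∈ X, G.Reachable x0 x := by
    intro y hy
    by_contra hcon
    let A : Finset V := Finset.univ.filter (fun z => G.Reachable x0 z)
    have hAm : ∀ z, z ∈ A ↔ G.Reachable x0 z := fun z => by simp [A]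
    have h0 : x0 ∈ A := (hAm _).2 (SimpleGraph.Reachable.refl _)
    have hyA : y ∉ A := fun h => hcon ((hAm _).1 h)
    have hne : A ≠ Aᶜ := by
      intro h
      rw [h] at h0
      rw [Finset.mem_compl] at h0
      exact h0 ((hAm _).2 (SimpleGraph.Reachable.refl _))
    have hle := le_compCount (G := G) (X := X) ∅ {A, Aᶜ} ?_ ?_ ?_ ?_
    · rw [Finset.card_pair hne] at hle
      have := hX ((∅ : Finset V) : Set V) (by omega)
      have h2 : (2 : ℝ) ≤ compCount G ((∅ : Finset V) : Set V) X := by exact_mod_cast hle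
      rw [Set.ncard_coe_finset] at this
      simp only [Finset.card_empty, Nat.cast_zero] at this
      nlinarith
    · intro C hC D hD hCD
      simp only [Finset.mem_insert, Finset.mem_singleton] at hC hD
      rcases hC with rfl | rfl <;> rcases hD with rfl | rfl
      · exact absurd rfl hCD
      · exact disjoint_compl_right
      · exact disjoint_compl_left
      · exact absurd rfl hCD
    · intro C hC
      simp only [Finset.mem_insert, Finset.mem_singleton] at hC
      rcases hC with rfl | rfl
      · exact ⟨x0, h0, hx0⟩
      · exact ⟨y, Finset.mem_compl.2 hyA, hy⟩
    · intro C _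
      exact Finset.disjoint_empty_right _
    · intro C hC u hu w _ huw
      simp only [Finset.mem_insert, Finset.mem_singleton] at hC
      rcases hC with rfl | rfl
      · exact (hAm _).2 (((hAm _).1 hu).trans huw.reachable)
      · rw [Finset.mem_compl] at *
        exact fun h => hu ((hAm _).2 (((hAm _).1 h).trans huw.symm.reachable))
  -- the minimal graph
  let S : Set (SimpleGraph V) := {H | H ≤ G ∧ ∀ x ∈ X, H.Reachable x0 x}
  obtain ⟨H, ⟨hHG, hXr⟩, hmin⟩ := Set.exists_min_image S
    (fun H => toLex (excess K H, H.edgeSet.ncard)) (Set.toFinite _) ⟨G, le_refl _, hGX⟩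
  have hexc : ∀ F : SimpleGraph V, F ≤ G → (∀ x ∈ X, F.Reachable x0 x) →
      excess K H ≤ excess K F := by
    intro F hF hFX
    have := hmin F ⟨hF, hFX⟩
    rw [Prod.Lex.toLex_le_toLex] at this
    rcases this with h | h
    · exact h.le
    · exact h.1.le
  have hdel : ∀ x y, H.Adj x y → ¬ ∀ z ∈ X, (H.deleteEdges {s(x, y)}).Reachable x0 z := by
    intro x y hxy hall
    have hle : H.deleteEdges {s(x, y)} ≤ H := SimpleGraph.deleteEdges_le _
    have h1 := hmin (H.deleteEdges {s(x, y)}) ⟨hle.trans hHG, hall⟩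
    rw [Prod.Lex.toLex_le_toLex] at h1
    have h2 : excess K (H.deleteEdges {s(x, y)}) ≤ excess K H := by
      unfold excess
      refine Finset.sum_le_sum fun v _ => ?_
      have := degree_le_of (A := H.deleteEdges {s(x, y)}) (B := H) (x := v) (fun y h => hle h)
      omega
    have h3 : (H.deleteEdges {s(x, y)}).edgeSet.ncard < H.edgeSet.ncard := by
      apply Set.ncard_lt_ncard _ (Set.toFinite _)
      rw [SimpleGraph.edgeSet_deleteEdges]
      refine ⟨Set.diff_subset, fun h => ?_⟩
      exact (h (show s(x, y) ∈ H.edgeSet from hxy)).2 rfl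
    rcases h1 with h | h
    · simp only at h
      omega
    · simp only at h
      omega
  obtain ⟨V0, hV0⟩ : ∃ V0 : Finset V, ∀ v, v ∈ V0 ↔ H.Reachable x0 v :=
    ⟨Finset.univ.filter (fun v => H.Reachable x0 v), fun v => by simp⟩
  have hdadj : ∀ {x y a b : V}, H.Adj a b → s(a, b) ≠ s(x, y) →
      (H.deleteEdges {s(x, y)}).Adj a b := by
    intro x y a b h hne
    rw [SimpleGraph.deleteEdges_adj]
    exact ⟨h, hne⟩
  have hsupp : ∀ x y, H.Adj x y → x ∈ V0 := by
    intro x y hxy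
    by_contra hx
    rw [hV0] at hx
    have hy : ¬ H.Reachable x0 y := fun h => hx (h.trans hxy.symm.reachable)
    apply hdel x y hxy
    intro z hz
    refine closed_of_reach (A := H) (P := fun z => (H.deleteEdges {s(x, y)}).Reachable x0 z) ?_
      (hXr z hz) (SimpleGraph.Reachable.refl _)
    intro a b hab ha
    have ha' : H.Reachable x0 a := ha.mono (SimpleGraph.deleteEdges_le _)
    refine ha.trans (hdadj hab ?_).reachable
    intro he
    rw [Sym2.eq_iff] at he
    rcases he with ⟨rfl, rfl⟩ | ⟨rfl, rfl⟩
    · exact hx ha'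
    · exact hy ha'
  have hacyc : H.IsAcyclic := by
    rw [SimpleGraph.isAcyclic_iff_forall_adj_isBridge]
    intro x y hxy hr
    have hr : (H.deleteEdges {s(x, y)}).Reachable x y := hr
    apply hdel x y hxy
    intro z hz
    refine reach_of_adj ?_ (hXr z hz)
    intro a b hab
    by_cases he : s(a, b) = s(x, y)
    · rw [Sym2.eq_iff] at he
      rcases he with ⟨rfl, rfl⟩ | ⟨rfl, rfl⟩
      · exact hr
      · exact hr.symm
    · exact (hdadj hab he).reachable
  have hleaf : ∀ v ∈ V0, v ∉ X → 2 ≤ H.degree v := by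
    intro v hv hvX
    have hvx : v ≠ x0 := fun h => hvX (h ▸ hx0)
    obtain ⟨p⟩ := ((hV0 v).1 hv).symm
    obtain ⟨n, hn⟩ : ∃ n, H.Adj v n := by
      cases p with
      | nil => exact absurd rfl hvx
      | cons h _ => exact ⟨_, h⟩
    by_contra hd
    have huniq : ∀ m, H.Adj v m → m = n := by
      intro m hm
      by_contra hmn
      apply hd
      rw [← SimpleGraph.card_neighborFinset_eq_degree]
      have : ({m, n} : Finset V) ⊆ H.neighborFinset v := by
        intro z hz
        simp only [Finset.mem_insert, Finset.mem_singleton] at hz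
        rw [SimpleGraph.mem_neighborFinset]
        rcases hz with rfl | rfl
        · exact hm
        · exact hn
      have h2 := Finset.card_le_card this
      rwa [Finset.card_pair hmn] at h2
    apply hdel v n hn
    intro z hz
    have key := closed_of_reach (A := H) (P := fun z => (H.deleteEdges {s(v, n)}).Reachable x0
      (if z = v then n else z)) ?_ (hXr z hz) (by rw [if_neg hvx.symm])
    · have hzv : z ≠ v := fun h => hvX (h ▸ hz)
      rwa [if_neg hzv] at key
    · intro a b hab ha
      by_cases hav : a = v
      · subst hav
        have hbn := huniq b hab
        subst hbn
        rw [if_pos rfl] at ha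
        rwa [if_neg hab.ne.symm]
      · rw [if_neg hav] at ha
        by_cases hbv : b = v
        · subst hbv
          have := huniq a hab.symm
          subst this
          rwa [if_pos rfl]
        · rw [if_neg hbv]
          refine ha.trans (hdadj hab ?_).reachable
          intro he
          rw [Sym2.eq_iff] at he
          rcases he with ⟨h, _⟩ | ⟨_, h⟩
          · exact hav h
          · exact hbv h
  have hresV0 : ∀ x, H.Reachable x0 x → (resG H V0).Reachable x0 x := by
    intro x hx
    refine reach_of_adj (fun a b hab => ?_) hx
    have : (resG H V0).Adj a b := ⟨hab, hsupp _ _ hab, hsupp _ _ hab.symm⟩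
    exact this.reachable
  have htree : (H.induce (V0 : Set V)).IsTree := by
    haveI : Nonempty (V0 : Set V) := ⟨⟨x0, (hV0 _).2 (SimpleGraph.Reachable.refl _)⟩⟩
    refine ⟨⟨fun x y => ?_⟩, hacyc.induce _⟩
    exact induce_reach ((hresV0 x ((hV0 _).1 x.2)).symm.trans (hresV0 y ((hV0 _).1 y.2))) x.2 y.2
  by_cases hall : ∀ v, H.degree v + 1 ≤ K
  · let T : G.Subgraph :=
      { verts := V0
        Adj := H.Adj
        adj_sub := fun h => hHG h
        edge_vert := fun h => hsupp _ _ h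
        symm := ⟨fun _ _ h => h.symm⟩ }
    refine ⟨T, fun x hx => (hV0 x).2 (hXr x hx), htree, ?_⟩
    intro v _
    have h1 : (T.neighborSet v).ncard = H.degree v := by
      rw [← SimpleGraph.card_neighborFinset_eq_degree, ← Set.ncard_coe_finset]
      congr 1
      ext y
      rw [SimpleGraph.coe_neighborFinset]
      rfl
    rw [h1]
    have h2 : ((H.degree v : ℝ) + 1) ≤ K := by exact_mod_cast hall v
    linarith
  · exfalso
    push Not at hall
    obtain ⟨d, hd⟩ := hall
    have hd0 : d ∈ V0 := by
      have : 0 < H.degree d := by omega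
      rw [SimpleGraph.degree_pos_iff_exists_adj] at this
      obtain ⟨y, hy⟩ := this
      exact hsupp _ _ hy
    obtain ⟨Fm, hbl, hdj, hcov, hcl⟩ := exists_family (K := K) (by omega) hHG hV0 hsupp hXr hexc
    obtain ⟨U, hU⟩ : ∃ U : Finset V, U = Fm.biUnion id := ⟨_, rfl⟩
    have hUm : ∀ x, x ∈ U ↔ ∃ C ∈ Fm, x ∈ C := by
      intro x
      rw [hU, Finset.mem_biUnion]
      rfl
    let B := V0 \ U
    let FX := Fm.filter (fun C => ∃ x ∈ C, x ∈ X)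
    have hdB : d ∈ B := by
      rw [Finset.mem_sdiff, hUm]
      refine ⟨hd0, ?_⟩
      rintro ⟨C, hC, hdC⟩
      have := (hbl C hC).deg d hdC
      omega
    have hcc : FX.card ≤ compCount G (B : Set V) X := by
      apply le_compCount
      · intro C hC D hD
        exact hdj C (Finset.mem_filter.1 hC).1 D (Finset.mem_filter.1 hD).1
      · intro C hC
        exact (Finset.mem_filter.1 hC).2
      · intro C hC
        rw [Finset.disjoint_left]
        intro x hx hxB
        exact (Finset.mem_sdiff.1 hxB).2 ((hUm x).2 ⟨C, (Finset.mem_filter.1 hC).1, hx⟩)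
      · intro C hC u hu w hwB huw
        by_contra hwC
        obtain ⟨hw0, hwF⟩ := hcl C (Finset.mem_filter.1 hC).1 u hu w huw hwC
        apply hwB
        rw [Finset.mem_sdiff, hUm]
        refine ⟨hw0, ?_⟩
        rintro ⟨D, hD, hwD⟩
        exact hwF D hD hwD
    -- counting
    have hts := tree_sum hsupp htree
    let g : V → ℤ := fun v => 2 - (H.degree v : ℤ)
    have hg0 : 2 ≤ ∑ v ∈ V0, g v := by
      simp only [g]
      rw [Finset.sum_sub_distrib, Finset.sum_const, ← Nat.cast_sum, nsmul_eq_mul]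
      have : ((∑ x ∈ V0, H.degree x : ℕ) : ℤ) + 2 ≤ 2 * V0.card := by exact_mod_cast hts
      linarith
    have hsplit : ∑ v ∈ V0, g v = ∑ v ∈ B, g v + ∑ C ∈ Fm, ∑ v ∈ C ∩ V0, g v := by
      have e1 : ∑ C ∈ Fm, ∑ v ∈ C ∩ V0, g v = ∑ v ∈ V0 ∩ U, g v := by
        rw [← Finset.sum_biUnion]
        · congr 1
          ext x
          simp only [Finset.mem_biUnion, Finset.mem_inter, hUm]
          tauto
        · intro C hC D hD hCD
          exact (hdj C hC D hD hCD).mono Finset.inter_subset_left Finset.inter_subset_left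
      rw [e1, add_comm]
      exact (Finset.sum_inter_add_sum_sdiff V0 U g).symm
    have hgB : ∑ v ∈ B, g v ≤ ∑ v ∈ B, (3 - (K : ℤ)) := by
      refine Finset.sum_le_sum fun v hv => ?_
      rw [Finset.mem_sdiff, hUm] at hv
      have : ¬ H.degree v + 2 ≤ K := fun h => hv.2 (hcov v hv.1 h)
      simp only [g]
      omega
    have hgC : ∑ C ∈ Fm, ∑ v ∈ C ∩ V0, g v ≤ ∑ C ∈ Fm, (if ∃ x ∈ C, x ∈ X then (2 : ℤ) else 0) := by
      refine Finset.sum_le_sum fun C hC => ?_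
      split_ifs with h
      · obtain ⟨a, ha, ha0⟩ := (hbl C hC).ne
        have h2 := two_card_le (R := H) (A := C ∩ V0) ⟨a, Finset.mem_inter.2 ⟨ha, ha0⟩⟩ ?_
        · simp only [g]
          rw [Finset.sum_sub_distrib, Finset.sum_const, ← Nat.cast_sum, nsmul_eq_mul]
          have : 2 * ((C ∩ V0).card : ℤ) ≤ ((∑ x ∈ C ∩ V0, H.degree x : ℕ) : ℤ) + 2 := by
            exact_mod_cast h2
          linarith
        · intro x hx y hy
          rw [Finset.mem_inter] at hx hy
          refine reach_of_adj (fun p q hpq => ?_) ((hbl C hC).conn x hx.1 hx.2 y hy.1 hy.2)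
          have : (resG H (C ∩ V0)).Adj p q :=
            ⟨hpq.1, Finset.mem_inter.2 ⟨hpq.2.1, hsupp _ _ hpq.1⟩,
              Finset.mem_inter.2 ⟨hpq.2.2, hsupp _ _ hpq.1.symm⟩⟩
          exact this.reachable
      · refine Finset.sum_nonpos fun v hv => ?_
        rw [Finset.mem_inter] at hv
        have := hleaf v hv.2 (fun hx => h ⟨v, hv.1, hx⟩)
        simp only [g]
        omega
    rw [Finset.sum_const, nsmul_eq_mul] at hgB
    rw [← Finset.sum_filter, Finset.sum_const, nsmul_eq_mul] at hgC
    have hfin : 2 + ((K : ℤ) - 3) * (B.card : ℤ) ≤ 2 * (compCount G (B : Set V) X : ℤ) := by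
      have : (FX.card : ℤ) ≤ (compCount G (B : Set V) X : ℤ) := by exact_mod_cast hcc
      have h5 : ((Finset.filter (fun C => ∃ x ∈ C, x ∈ X) Fm).card : ℤ) = FX.card := rfl
      rw [h5] at hgC
      linarith
    have hB1 : 1 ≤ B.card := Finset.card_pos.2 ⟨d, hdB⟩
    have hgt : 1 < compCount G (B : Set V) X := by
      have h1 : (1 : ℤ) ≤ B.card := by exact_mod_cast hB1
      have h2 : (1 : ℤ) ≤ (K : ℤ) - 3 := by omega
      have : 1 ≤ ((K : ℤ) - 3) * (B.card : ℤ) := by nlinarith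
      omega
    have ht := hX (B : Set V) hgt
    rw [Set.ncard_coe_finset] at ht
    have hfinR : 2 + ((K : ℝ) - 3) * (B.card : ℝ) ≤ 2 * (compCount G (B : Set V) X : ℝ) := by
      exact_mod_cast hfin
    have hb : (1 : ℝ) ≤ B.card := by exact_mod_cast hB1
    have hk : 2 < φ * ((K : ℝ) - 3) := by
      have h1 : 2 / φ < (K : ℝ) - 3 := by linarith
      rw [div_lt_iff₀ hφ] at h1
      linarith
    have h6 := mul_le_mul_of_nonneg_left hfinR hφ.le
    have h7 : 2 * (B.card : ℝ) ≤ φ * ((K : ℝ) - 3) * B.card := by nlinarith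
    nlinarith

end Helpers

/-- Any nonempty `φ`-tough set `X` admits a Steiner tree
spanning `X` of maximum degree at most `2/φ + 3`. -/
theorem stmt_8 (V : Type) [Fintype V] (G : SimpleGraph V) (φ : ℝ) (hφ : 0 < φ)
    (X : Set V) (hXne : X.Nonempty) (hX : IsTough G X φ) :
    ∃ T : G.Subgraph, X ⊆ T.verts ∧ T.coe.IsTree ∧
      ∀ v ∈ T.verts, ((T.neighborSet v).ncard : ℝ) ≤ 2 / φ + 3 := by
  obtain ⟨x0, hx0⟩ := hXne
  exact main_aux G φ hφ X x0 hx0 hX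
end

section
/- For every constant c ≥ 1 there is a constant C such that for all integers n ≥ 2 and f ≥ 1 there exists a decoder function D (depending only on n, f, and c) with the following property: for every finite simple graph G = (V,E) on n vertices there exists a finitely supported probability distribution over pairs of labeling functions (L_V : V → {0,1}^{b_V}, L_E : E → {0,1}^{b_E}) with b_V ≤ C·log₂ n and b_E ≤ f + C·log₂ n, such that for every fixed s,t ∈ V and F ⊆ E with |F| ≤ f, with probability at least 1 − n^{−c} over the random labeling, D applied to (L_V(s), L_V(t), {L_E(e) : e ∈ F}) outputs true if and only if s and t lie in the same connected component of G − F. -/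
open scoped Classical

namespace Lab

def dl {n : ℕ} (x : Fin n → ZMod 2) : Sym2 (Fin n) → ZMod 2 :=
  Sym2.lift ⟨fun u v => x u + x v, fun _ _ => add_comm _ _⟩

lemma zadd (a : ZMod 2) : a + a = 0 := by revert a; decide

lemma walk_sum {n : ℕ} {G : SimpleGraph (Fin n)} (x : Fin n → ZMod 2) {u v : Fin n}
    (w : G.Walk u v) : (w.edges.map (dl x)).sum = x u + x v := by
  induction w with
  | nil => simp [zadd]
  | @cons a b c h p ih =>
    simp only [SimpleGraph.Walk.edges_cons, List.map_cons, List.sum_cons, ih]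
    simp only [dl, Sym2.lift_mk]
    linear_combination zadd (x b)

lemma walk_sum' {n : ℕ} {G : SimpleGraph (Fin n)} (x : Fin n → ZMod 2) {u v : Fin n}
    (w : G.Walk u v) :
    ∑ e ∈ G.edgeFinset, dl x e * (w.edges.count e : ZMod 2) = x u + x v := by
  rw [← walk_sum x w, Finset.sum_list_map_count]
  symm
  simp only [nsmul_eq_mul, mul_comm]
  apply Finset.sum_subset
  · intro e he
    rw [SimpleGraph.mem_edgeFinset]
    exact w.edges_subset_edgeSet (by simpa using he)
  · intro e _ he
    have : e ∉ w.edges := by simpa using he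
    simp [List.count_eq_zero_of_not_mem this]

lemma one_occ {α : Type*} [DecidableEq α] (e : α) (l : List α) (h : l.count e ≤ 1) :
    ∃ b ≤ l.length, ∀ k ≤ l.length, (l.take k).count e = if k ≤ b then 0 else 1 := by
  induction l with
  | nil => exact ⟨0, by simp, by simp⟩
  | cons y l ih =>
    by_cases hy : y = e
    · subst hy
      have h0 : l.count y = 0 := by simpa using h
      refine ⟨0, by simp, ?_⟩
      intro k hk
      cases k with
      | zero => simp
      | succ k =>
        have : (l.take k).count y = 0 := by
          have := (List.take_sublist k l).count_le y
          omega
        simp [this]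
    · rw [List.count_cons_of_ne hy] at h
      obtain ⟨b, hb, H⟩ := ih h
      refine ⟨b+1, by simpa using hb, ?_⟩
      intro k hk
      cases k with
      | zero => simp
      | succ k =>
        simp only [List.take_succ_cons, List.count_cons_of_ne hy]
        rw [H k (by simpa using hk)]
        simp

lemma two_occ {α : Type*} [DecidableEq α] (e : α) (l : List α) (h : l.count e ≤ 2) :
    ∃ a ≤ l.length, ∃ b ≤ l.length, ∀ k ≤ l.length, ((l.take k).count e : ZMod 2) =
      if a < k ∧ k ≤ b then 1 else 0 := by
  induction l with
  | nil => exact ⟨0, by simp, 0, by simp, by simp⟩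
  | cons y l ih =>
    by_cases hy : y = e
    · subst hy
      have h0 : l.count y ≤ 1 := by simpa using h
      obtain ⟨b, hb, H⟩ := one_occ y l h0
      refine ⟨0, by simp, b+1, by simpa using hb, ?_⟩
      intro k hk
      cases k with
      | zero => simp
      | succ k =>
        simp only [List.take_succ_cons, List.count_cons_self]
        rw [H k (by simpa using hk)]
        by_cases hkb : k ≤ b
        · simp [hkb]
        · simp [hkb]; decide
    · rw [List.count_cons_of_ne hy] at h
      obtain ⟨a, ha, b, hb, H⟩ := ih h
      refine ⟨a+1, by simpa using ha, b+1, by simpa using hb, ?_⟩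
      intro k hk
      cases k with
      | zero => simp
      | succ k =>
        simp only [List.take_succ_cons, List.count_cons_of_ne hy]
        rw [H k (by simpa using hk)]
        simp

lemma len_le {n : ℕ} (l : List (Sym2 (Fin n))) (h : ∀ e, l.count e ≤ 2) :
    l.length ≤ n ^ 2 + n := by
  have h1 : l.length = ∑ e ∈ l.toFinset, l.count e := (List.sum_toFinset_count_eq_length l).symm
  have h2 : ∑ e ∈ l.toFinset, l.count e ≤ ∑ e : Sym2 (Fin n), 2 :=
    (Finset.sum_le_sum (fun e _ => h e)).trans (Finset.sum_le_sum_of_subset (Finset.subset_univ _))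
  simp only [Finset.sum_const, Finset.card_univ, Sym2.card, Fintype.card_fin, smul_eq_mul] at h2
  have h3 : (n+1).choose 2 * 2 = n^2 + n := by
    have := Nat.triangle_succ n
    rw [Nat.choose_two_right]
    have := Nat.div_mul_cancel (Nat.even_mul_pred_self (n+1)).two_dvd
    simp only [Nat.add_sub_cancel] at *
    rw [this]; ring
  omega

/-- a covering closed walk -/
lemma cover {n : ℕ} (G : SimpleGraph (Fin n)) (r : Fin n) :
    ∃ w : G.Walk r r, (∀ e, w.edges.count e ≤ 2) ∧ ∀ v, G.Reachable r v → v ∈ w.support := by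
  have key : ∀ m : ℕ, ∀ w : G.Walk r r, (∀ e, w.edges.count e ≤ 2) →
      (Finset.univ \ w.support.toFinset).card = m →
      ∃ w : G.Walk r r, (∀ e, w.edges.count e ≤ 2) ∧ ∀ v, G.Reachable r v → v ∈ w.support := by
    intro m
    induction m using Nat.strong_induction_on with
    | _ m ih =>
    intro w hw hm
    by_cases hall : ∀ v, G.Reachable r v → v ∈ w.support
    · exact ⟨w, hw, hall⟩
    push Not at hall
    obtain ⟨v, ⟨p⟩, hv⟩ := hall
    obtain ⟨d, hd, h1, h2⟩ := p.exists_boundary_dart {x | x ∈ w.support} (by simp) (by simpa using hv)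
    simp only [Set.mem_ofPred_eq] at h1 h2
    let w' : G.Walk r r := (w.takeUntil d.fst h1).append
      (.cons d.adj (.cons d.adj.symm (w.dropUntil d.fst h1)))
    have hsup : ∀ x, x ∈ w'.support ↔ x ∈ w.support ∨ x = d.snd := by
      intro x
      have : x ∈ w.support ↔ x ∈ ((w.takeUntil d.fst h1).append (w.dropUntil d.fst h1)).support := by
        rw [SimpleGraph.Walk.take_spec]
      rw [this]
      simp only [w', SimpleGraph.Walk.mem_support_append_iff, SimpleGraph.Walk.support_cons,
        List.mem_cons]
      have := (w.dropUntil d.fst h1).start_mem_support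
      constructor
      · rintro (h | h | h | h) <;> simp_all
      · rintro ((h | h) | h) <;> simp_all
    have hcnt : ∀ e, w'.edges.count e = w.edges.count e + if e = s(d.fst, d.snd) then 2 else 0 := by
      intro e
      have : w.edges.count e =
          ((w.takeUntil d.fst h1).append (w.dropUntil d.fst h1)).edges.count e := by
        rw [SimpleGraph.Walk.take_spec]
      rw [this]
      simp only [w', SimpleGraph.Walk.edges_append, SimpleGraph.Walk.edges_cons, List.count_append,
        List.count_cons, Sym2.eq_swap (a := d.snd)]
      by_cases he : e = s(d.fst, d.snd)
      · simp [he]; omega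
      · have : s(d.fst, d.snd) ≠ e := fun h => he h.symm
        simp [he, this]
    refine ih _ ?_ w' ?_ rfl
    · rw [← hm]
      apply Finset.card_lt_card
      rw [Finset.ssubset_iff_of_subset]
      · refine ⟨d.snd, by simpa using h2, ?_⟩
        simp [hsup]
      · intro x; simp only [Finset.mem_sdiff, Finset.mem_univ, List.mem_toFinset, hsup]; tauto
    · intro e
      rw [hcnt]
      by_cases he : e = s(d.fst, d.snd)
      · have : e ∉ w.edges := by
          rw [he]; intro h
          exact h2 (w.snd_mem_support_of_mem_edges h)
        subst he
        simp [List.count_eq_zero_of_not_mem this]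
      · simpa [he] using hw e
  exact key _ .nil (by simp) rfl

abbrev VL (n : ℕ) := Fin n × Fin (n ^ 3)
abbrev EL (n : ℕ) := Fin n × Fin (n ^ 3) × Fin (n ^ 3)

def par {n : ℕ} (e : EL n) (v : VL n) : ZMod 2 :=
  if e.1 = v.1 ∧ e.2.1 < v.2 ∧ v.2 ≤ e.2.2 then 1 else 0

lemma struct {n : ℕ} (hn : 2 ≤ n) (G : SimpleGraph (Fin n)) :
    ∃ (lv : Fin n → VL n) (le : Sym2 (Fin n) → EL n),
      (∀ s t, (lv s).1 = (lv t).1 ↔ G.Reachable s t) ∧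
      ∀ v, ∃ q : G.Walk (lv v).1 v, ∀ e ∈ G.edgeSet,
        (q.edges.count e : ZMod 2) = par (le e) (lv v) := by
  have hlt : n ^ 2 + n < n ^ 3 := by nlinarith [Nat.mul_le_mul hn hn, Nat.mul_le_mul (Nat.mul_le_mul hn (le_refl n)) (le_refl n)]
  choose w hw hcov using cover G
  let r : Fin n → Fin n := fun v => (G.connectedComponentMk v).out
  have hr : ∀ s t, r s = r t ↔ G.Reachable s t := by
    intro s t
    rw [← SimpleGraph.ConnectedComponent.eq]
    constructor
    · intro h
      have := congrArg G.connectedComponentMk h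
      simpa [r, SimpleGraph.connectedComponentMk] using this
    · intro h; simp [r, h]
  have hrv : ∀ v, G.Reachable (r v) v := by
    intro v
    rw [← SimpleGraph.ConnectedComponent.eq]
    exact Quot.out_eq _
  have hmem : ∀ v, v ∈ (w (r v)).support := fun v => hcov _ _ (hrv v)
  have hlen : ∀ v, (w v).edges.length < n ^ 3 := fun v => (len_le _ (hw v)).trans_lt hlt
  choose a ha b hb hab using fun v e => two_occ e (w v).edges (hw v e)
  have htl : ∀ v, ((w (r v)).takeUntil v (hmem v)).length ≤ (w (r v)).edges.length := by
    intro v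
    rw [SimpleGraph.Walk.length_edges]
    exact SimpleGraph.Walk.length_takeUntil_le_length _ _
  let re : Sym2 (Fin n) → Fin n := fun e => r (Quot.out e).1
  refine ⟨fun v => (r v, ⟨_, (htl v).trans_lt (hlen _)⟩),
    fun e => (re e, ⟨a (re e) e, (ha _ _).trans_lt (hlen _)⟩, ⟨b (re e) e, (hb _ _).trans_lt (hlen _)⟩),
    hr, ?_⟩
  intro v
  refine ⟨(w (r v)).takeUntil v (hmem v), ?_⟩
  intro e he
  by_cases hre : re e = r v
  · have h1 := hab (r v) e _ (htl v)
    have h2 : (w (r v)).edges.take ((w (r v)).takeUntil v (hmem v)).length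
        = ((w (r v)).takeUntil v (hmem v)).edges := by
      have h5 := congrArg SimpleGraph.Walk.edges (SimpleGraph.Walk.take_spec (w (r v)) (hmem v))
      rw [SimpleGraph.Walk.edges_append] at h5
      conv_lhs => rw [← h5]
      apply List.take_left'
      simp
    rw [h2] at h1
    rw [h1]
    simp [par, hre]
  · have : e ∉ ((w (r v)).takeUntil v (hmem v)).edges := by
      intro hin
      apply hre
      have h3 : (Quot.out e).1 ∈ ((w (r v)).takeUntil v (hmem v)).support := by
        have : e = s((Quot.out e).1, (Quot.out e).2) := (Quot.out_eq e).symm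
        rw [this] at hin
        exact SimpleGraph.Walk.fst_mem_support_of_mem_edges _ hin
      have h4 : G.Reachable (r v) (Quot.out e).1 := ⟨SimpleGraph.Walk.takeUntil _ _ h3⟩
      exact (hr _ _).2 (h4.symm.trans (hrv v))
    simp [List.count_eq_zero_of_not_mem this, par, hre]


noncomputable def Z {n : ℕ} (G : SimpleGraph (Fin n)) : Finset (Sym2 (Fin n) → ZMod 2) :=
  Finset.univ.filter fun z => ∀ x, ∑ e ∈ G.edgeFinset, dl x e * z e = 0

lemma Z_add {n : ℕ} {G : SimpleGraph (Fin n)} {y z : Sym2 (Fin n) → ZMod 2}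
    (hy : y ∈ Z G) (hz : z ∈ Z G) : y + z ∈ Z G := by
  simp only [Z, Finset.mem_filter, Finset.mem_univ, true_and] at *
  intro x
  simp [mul_add, Finset.sum_add_distrib, hy x, hz x]

lemma half {n : ℕ} {G : SimpleGraph (Fin n)} (F : Finset (Sym2 (Fin n)))
    (z0 : Sym2 (Fin n) → ZMod 2) (hz0 : z0 ∈ Z G) (h0 : ∑ e ∈ F, z0 e ≠ 0) :
    2 * ((Z G).filter fun z => ∑ e ∈ F, z e = 0).card ≤ (Z G).card := by
  have h1 : ((Z G).filter fun z => ∑ e ∈ F, z e = 0).card ≤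
      ((Z G).filter fun z => ¬ ∑ e ∈ F, z e = 0).card := by
    apply Finset.card_le_card_of_injOn (fun z => z + z0)
    · intro z hz
      simp only [Finset.coe_filter, Set.mem_ofPred_eq] at hz ⊢
      refine ⟨Z_add hz.1 hz0, ?_⟩
      simp only [Pi.add_apply, Finset.sum_add_distrib, hz.2, zero_add]
      exact h0
    · intro a _ b _ h
      exact add_right_cancel h
  have h2 := Finset.card_filter_add_card_filter_not (s := Z G) (fun z => ∑ e ∈ F, z e = 0)
  omega

noncomputable def Om {n : ℕ} (G : SimpleGraph (Fin n)) (b : ℕ) :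
    Finset (Fin b → Sym2 (Fin n) → ZMod 2) := Fintype.piFinset fun _ => Z G

def Dec {n b : ℕ} (lv : Fin n → VL n) (le : Sym2 (Fin n) → EL n)
    (s t : Fin n) (F : Finset (Sym2 (Fin n))) (ω : Fin b → Sym2 (Fin n) → ZMod 2) : Prop :=
  (lv s).1 = (lv t).1 ∧ ∀ F' ⊆ F, (∀ k, ∑ e ∈ F', ω k e = 0) →
    ∑ e ∈ F', (par (le e) (lv s) + par (le e) (lv t)) = 0

lemma zcases (a : ZMod 2) : a = 0 ∨ a = 1 := by revert a; decide

lemma main {n : ℕ} {G : SimpleGraph (Fin n)} (f b : ℕ)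
    (lv : Fin n → VL n) (le : Sym2 (Fin n) → EL n)
    (hr : ∀ s t, (lv s).1 = (lv t).1 ↔ G.Reachable s t)
    (hq : ∀ v, ∃ q : G.Walk (lv v).1 v, ∀ e ∈ G.edgeSet,
        (q.edges.count e : ZMod 2) = par (le e) (lv v))
    (s t : Fin n) (F : Finset (Sym2 (Fin n)))
    (hF : (↑F : Set (Sym2 (Fin n))) ⊆ G.edgeSet) (hf : F.card ≤ f) :
    2 ^ b * ((Om G b).filter fun ω => ¬ (Dec lv le s t F ω ↔
      (G.deleteEdges (↑F : Set (Sym2 (Fin n)))).Reachable s t)).card ≤ 2 ^ f * (Om G b).card := by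
  obtain ⟨qs, hqs⟩ := hq s
  obtain ⟨qt, hqt⟩ := hq t
  by_cases hR : (G.deleteEdges (↑F : Set (Sym2 (Fin n)))).Reachable s t
  · have hst : (lv s).1 = (lv t).1 := (hr s t).2 (hR.mono (SimpleGraph.deleteEdges_le _))
    obtain ⟨p⟩ := hR
    let p' : G.Walk s t := p.mapLe (SimpleGraph.deleteEdges_le _)
    have hp' : ∀ e ∈ F, e ∉ p'.edges := by
      intro e he hep
      have : p'.edges = p.edges := by simp [p']
      rw [this] at hep
      have := p.edges_subset_edgeSet hep
      rw [SimpleGraph.edgeSet_deleteEdges] at this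
      exact this.2 he
    let z0 : Sym2 (Fin n) → ZMod 2 := fun e =>
      (qs.edges.count e : ZMod 2) + (qt.edges.count e : ZMod 2) + (p'.edges.count e : ZMod 2)
    have hz0 : z0 ∈ Z G := by
      simp only [Z, Finset.mem_filter, Finset.mem_univ, true_and]
      intro x
      simp only [z0, mul_add, Finset.sum_add_distrib, walk_sum', hst]
      linear_combination zadd (x (lv t).1) + zadd (x s) + zadd (x t)
    have hz0F : ∀ F' ⊆ F, ∑ e ∈ F', z0 e = ∑ e ∈ F', (par (le e) (lv s) + par (le e) (lv t)) := by
      intro F' hF'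
      apply Finset.sum_congr rfl
      intro e he
      have heF := hF' he
      simp only [z0]
      rw [hqs e (hF heF), hqt e (hF heF), List.count_eq_zero_of_not_mem (hp' e heF)]
      simp
    let K : Finset (Sym2 (Fin n)) → Finset (Sym2 (Fin n) → ZMod 2) := fun F' =>
      (Z G).filter fun z => ∑ e ∈ F', z e = 0
    have hsub : ((Om G b).filter fun ω => ¬ (Dec lv le s t F ω ↔
      (G.deleteEdges (↑F : Set (Sym2 (Fin n)))).Reachable s t)) ⊆
      (F.powerset.filter fun F' => ∑ e ∈ F', z0 e ≠ 0).biUnion fun F' =>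
        Fintype.piFinset fun _ : Fin b => K F' := by
      intro ω hω
      simp only [Finset.mem_filter] at hω
      obtain ⟨hΩ, hbad⟩ := hω
      have hD : ¬ Dec lv le s t F ω := fun h => hbad ⟨fun _ => ⟨p⟩, fun _ => h⟩
      simp only [Dec, hst, true_and] at hD
      push Not at hD
      obtain ⟨F', hF', h1, h2⟩ := hD
      simp only [Finset.mem_biUnion, Finset.mem_filter, Finset.mem_powerset, Fintype.mem_piFinset]
      refine ⟨F', ⟨hF', ?_⟩, fun k => ?_⟩
      · rw [hz0F F' hF']; simpa [hst] using h2
      · simp only [K, Finset.mem_filter]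
        exact ⟨by simpa [Om] using (Fintype.mem_piFinset.1 hΩ k), h1 k⟩
    have hc := (Finset.card_le_card hsub).trans Finset.card_biUnion_le
    calc _ ≤ 2 ^ b * _ := Nat.mul_le_mul_left _ hc
      _ = ∑ F' ∈ F.powerset.filter (fun F' => ∑ e ∈ F', z0 e ≠ 0), (2 * (K F').card) ^ b := by
        rw [Finset.mul_sum]
        apply Finset.sum_congr rfl
        intro F' _
        simp [mul_pow]
      _ ≤ ∑ F' ∈ F.powerset.filter (fun F' => ∑ e ∈ F', z0 e ≠ 0), (Om G b).card := by
        apply Finset.sum_le_sum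
        intro F' hF'
        have : (Om G b).card = (Z G).card ^ b := by simp [Om]
        rw [this]
        exact Nat.pow_le_pow_left (half F' z0 hz0 (Finset.mem_filter.1 hF').2) _
      _ ≤ _ := by
        rw [Finset.sum_const, smul_eq_mul]
        apply Nat.mul_le_mul_right
        calc _ ≤ F.powerset.card := Finset.card_filter_le _ _
          _ = 2 ^ F.card := Finset.card_powerset _
          _ ≤ _ := Nat.pow_le_pow_right (by norm_num) hf
  · have : ((Om G b).filter fun ω => ¬ (Dec lv le s t F ω ↔
      (G.deleteEdges (↑F : Set (Sym2 (Fin n)))).Reachable s t)) = ∅ := by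
      apply Finset.filter_eq_empty_iff.2
      intro ω hΩ
      simp only [not_not, hR, iff_false]
      rintro ⟨hst, hD⟩
      let x : Fin n → ZMod 2 := fun v =>
        if (G.deleteEdges (↑F : Set (Sym2 (Fin n)))).Reachable s v then 1 else 0
      let F' := G.edgeFinset.filter fun e => dl x e ≠ 0
      have hF' : F' ⊆ F := by
        intro e he
        simp only [F', Finset.mem_filter, SimpleGraph.mem_edgeFinset] at he
        obtain ⟨he, hx⟩ := he
        by_contra hne
        induction e using Sym2.ind with
        | _ u v =>
        have hadj : (G.deleteEdges (↑F : Set (Sym2 (Fin n)))).Adj u v := by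
          rw [SimpleGraph.deleteEdges_adj]
          exact ⟨he, hne⟩
        apply hx
        have : x u = x v := by
          have : (G.deleteEdges (↑F : Set (Sym2 (Fin n)))).Reachable s u ↔
            (G.deleteEdges (↑F : Set (Sym2 (Fin n)))).Reachable s v :=
            ⟨fun h => h.trans hadj.reachable, fun h => h.trans hadj.symm.reachable⟩
          simp only [x, this]
        simp [dl, this, zadd]
      have hsum : ∀ z : Sym2 (Fin n) → ZMod 2,
          ∑ e ∈ F', z e = ∑ e ∈ G.edgeFinset, dl x e * z e := by
        intro z
        rw [Finset.sum_filter]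
        apply Finset.sum_congr rfl
        intro e _
        rcases zcases (dl x e) with h | h <;> simp [h]
      have h1 := hD F' hF' (fun k => by
        rw [hsum]
        have := Fintype.mem_piFinset.1 hΩ k
        simp only [Z, Finset.mem_filter, Finset.mem_univ, true_and] at this
        exact this x)
      have h2 : ∑ e ∈ F', (par (le e) (lv s) + par (le e) (lv t)) = x s + x t := by
        rw [Finset.sum_congr rfl (g := fun e =>
          (qs.edges.count e : ZMod 2) + (qt.edges.count e : ZMod 2)), hsum]
        · simp only [mul_add, Finset.sum_add_distrib, walk_sum', hst]
          linear_combination zadd (x (lv t).1)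
        · intro e he
          rw [hqs e (hF (hF' he)), hqt e (hF (hF' he))]
      rw [h2] at h1
      simp [x, hR] at h1
    rw [this]; simp

lemma exists_enc {α : Type} [Fintype α] [Nonempty α] (k : ℕ) (h : Fintype.card α ≤ 2 ^ k) :
    ∃ (enc : α → Fin k → Bool) (dec : (Fin k → Bool) → α), ∀ a, dec (enc a) = a := by
  have : Fintype.card α ≤ Fintype.card (Fin k → Bool) := by simpa using h
  obtain ⟨e⟩ := Function.Embedding.nonempty_of_card_le this
  exact ⟨e, Function.invFun e, Function.leftInverse_invFun e.injective⟩

end Lab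

/-- Randomized edge-fault connectivity labels with
`O(log n)`-bit vertex labels and `(f + O(log n))`-bit edge labels, answering
each fixed query correctly with probability at least `1 − n^{−c}`. -/
theorem stmt_13 :
    ∀ c : ℝ, 1 ≤ c → ∃ C : ℝ, ∀ n f : ℕ, 2 ≤ n → 1 ≤ f →
      ∃ bV bE : ℕ,
        (bV : ℝ) ≤ C * Real.logb 2 n ∧
        (bE : ℝ) ≤ (f : ℝ) + C * Real.logb 2 n ∧
        ∃ D : (Fin bV → Bool) → (Fin bV → Bool) → Finset (Fin bE → Bool) → Bool,
          ∀ G : SimpleGraph (Fin n),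
            ∃ (N : ℕ) (μ : Fin N → ℝ)
              (LV : Fin N → Fin n → Fin bV → Bool)
              (LE : Fin N → Sym2 (Fin n) → Fin bE → Bool),
              (∀ ω, 0 ≤ μ ω) ∧ (∑ ω, μ ω = 1) ∧
              ∀ (s t : Fin n) (F : Finset (Sym2 (Fin n))),
                (↑F : Set (Sym2 (Fin n))) ⊆ G.edgeSet → F.card ≤ f →
                1 - (n : ℝ) ^ (-c) ≤
                  ∑ ω ∈ Finset.univ.filter (fun ω =>
                      (D (LV ω s) (LV ω t) (F.image (LE ω)) = true ↔
                        (G.deleteEdges (↑F : Set (Sym2 (Fin n)))).Reachable s t)),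
                    μ ω := by
  intro c hc
  refine ⟨2 * ((⌈c⌉₊ : ℝ) + 9), ?_⟩
  intro n f hn hf
  obtain ⟨L, hL⟩ : ∃ L, L = Nat.clog 2 n := ⟨_, rfl⟩
  have hnL : n ≤ 2 ^ L := hL ▸ Nat.le_pow_clog (by norm_num) n
  have hlog1 : 1 ≤ Real.logb 2 n := by
    rw [Real.le_logb_iff_rpow_le (by norm_num) (by positivity)]
    simpa using (by exact_mod_cast hn : (2:ℝ) ≤ n)
  have hL2 : (L : ℝ) ≤ 2 * Real.logb 2 n := by
    have h1 : 2 ^ (L - 1) < n := by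
      rw [hL]
      exact Nat.pow_pred_clog_lt_self (by norm_num) (by omega)
    have hLpos : 1 ≤ L := by
      rw [hL]; exact Nat.clog_pos (by norm_num) hn
    have h2 : ((L - 1 : ℕ) : ℝ) ≤ Real.logb 2 n := by
      rw [Real.le_logb_iff_rpow_le (by norm_num) (by positivity), Real.rpow_natCast]
      exact_mod_cast h1.le
    rw [Nat.cast_sub hLpos] at h2
    push_cast at h2
    linarith
  obtain ⟨b, hb⟩ : ∃ b, b = f + ⌈c⌉₊ * L := ⟨_, rfl⟩
  have : NeZero n := ⟨by omega⟩
  have hcc : (0:ℝ) ≤ (⌈c⌉₊ : ℝ) := by positivity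
  refine ⟨4 * L, b + 9 * L, ?_, ?_, ?_⟩
  · push_cast; nlinarith
  · rw [hb]; push_cast; nlinarith
  have : NeZero (n ^ 3) := ⟨by positivity⟩
  obtain ⟨eV, dV, hV⟩ := Lab.exists_enc (α := Lab.VL n) (4 * L) (by
    simp only [Fintype.card_prod, Fintype.card_fin]
    calc n * n ^ 3 = n ^ 4 := by ring
      _ ≤ (2 ^ L) ^ 4 := Nat.pow_le_pow_left hnL 4
      _ = _ := by rw [← pow_mul, mul_comm])
  obtain ⟨eE, dE, hE⟩ := Lab.exists_enc
    (α := (Fin b → ZMod 2) × Sym2 (Fin n) × Lab.EL n) (b + 9 * L) (by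
    have hs : Fintype.card (Sym2 (Fin n)) ≤ n ^ 2 := by
      rw [Sym2.card, Fintype.card_fin, Nat.choose_two_right]
      apply Nat.div_le_of_le_mul
      simp only [Nat.add_sub_cancel]
      nlinarith
    simp only [Fintype.card_prod, Fintype.card_fin, Fintype.card_pi, ZMod.card, Finset.prod_const,
      Finset.card_univ]
    calc 2 ^ b * (Fintype.card (Sym2 (Fin n)) * (n * (n ^ 3 * n ^ 3)))
        ≤ 2 ^ b * (n ^ 2 * (n * (n ^ 3 * n ^ 3))) := by gcongr
      _ = 2 ^ b * n ^ 9 := by ring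
      _ ≤ 2 ^ b * (2 ^ L) ^ 9 := by gcongr
      _ = _ := by rw [← pow_mul, pow_add, mul_comm L])
  refine ⟨fun a a' S => decide ((dV a).1 = (dV a').1 ∧ ∀ S' ⊆ S,
    (∀ k, ∑ y ∈ S', (dE y).1 k = 0) →
      ∑ y ∈ S', (Lab.par (dE y).2.2 (dV a) + Lab.par (dE y).2.2 (dV a')) = 0), ?_⟩
  intro G
  obtain ⟨lv, le, hr, hq⟩ := Lab.struct hn G
  let Ω := Lab.Om G b
  let ev : Fin Ω.card ≃ Ω := Ω.equivFin.symm
  have hpos : 0 < Ω.card := by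
    apply Finset.card_pos.2
    refine ⟨fun _ => 0, ?_⟩
    simp [Ω, Lab.Om, Lab.Z]
  have hposR : (0:ℝ) < Ω.card := by exact_mod_cast hpos
  refine ⟨Ω.card, fun _ => 1 / (Ω.card : ℝ), fun _ v => eV (lv v),
    fun ω e => eE (fun k => (ev ω).1 k e, e, le e), fun _ => by positivity, ?_, ?_⟩
  · simp [hposR.ne']
  intro s t F hF hFf
  have hm := Lab.main f b lv le hr hq s t F hF hFf
  have hiff : ∀ ω : Fin Ω.card, (decide ((dV (eV (lv s))).1 = (dV (eV (lv t))).1 ∧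
      ∀ S' ⊆ F.image (fun e => eE (fun k => (ev ω).1 k e, e, le e)),
      (∀ k, ∑ y ∈ S', (dE y).1 k = 0) →
      ∑ y ∈ S', (Lab.par (dE y).2.2 (dV (eV (lv s))) + Lab.par (dE y).2.2 (dV (eV (lv t)))) = 0)
       = true) ↔ Lab.Dec lv le s t F (ev ω).1 := by
    intro ω
    have hinj : Function.Injective
        (fun e => eE (fun k => (ev ω).1 k e, e, le e)) := by
      intro e e' h
      have h2 := congrArg (fun y => (dE y).2.1) h
      simpa [hE] using h2
    rw [decide_eq_true_iff]
    simp only [hV, Lab.Dec]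
    apply and_congr_right
    intro _
    constructor
    · intro h F' hF'
      have h3 := h _ (Finset.image_subset_image hF')
      simpa only [Finset.sum_image hinj.injOn, hE] using h3
    · intro h S' hS'
      obtain ⟨F', hF', rfl⟩ := Finset.subset_image_iff.1 hS'
      have h3 := h F' (by exact_mod_cast hF')
      simpa only [Finset.sum_image hinj.injOn, hE] using h3
  simp only [hiff]
  rw [Finset.sum_const, nsmul_eq_mul]
  let P : (Fin b → Sym2 (Fin n) → ZMod 2) → Prop := fun ω => (Lab.Dec lv le s t F ω ↔
      (G.deleteEdges (↑F : Set (Sym2 (Fin n)))).Reachable s t)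
  have hcard : (Finset.univ.filter fun ω : Fin Ω.card => P (ev ω).1).card =
      (Ω.filter P).card := by
    apply Finset.card_bij (fun ω _ => (ev ω).1)
    · intro ω hω
      simp only [Finset.mem_filter, Finset.mem_univ, true_and] at hω ⊢
      exact ⟨(ev ω).2, hω⟩
    · intro ω _ ω' _ h
      exact ev.injective (Subtype.ext h)
    · intro ω hω
      simp only [Finset.mem_filter] at hω
      exact ⟨ev.symm ⟨ω, hω.1⟩, by simpa using hω.2, by simp⟩
  have hsplit := Finset.card_filter_add_card_filter_not (s := Ω) P
  change 1 - (n:ℝ) ^ (-c) ≤ ((Finset.univ.filter fun ω : Fin Ω.card => P (ev ω).1).card : ℝ) * _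
  rw [hcard]
  change 2 ^ b * (Ω.filter fun ω => ¬ P ω).card ≤ 2 ^ f * Ω.card at hm
  have hmR : (2:ℝ) ^ b * ((Ω.filter fun ω => ¬ P ω).card : ℝ) ≤ 2 ^ f * Ω.card := by
    exact_mod_cast hm
  have hsR : ((Ω.filter P).card : ℝ) + ((Ω.filter fun ω => ¬ P ω).card : ℝ) = Ω.card := by
    exact_mod_cast hsplit
  have hnc : (n:ℝ) ^ c ≤ 2 ^ (⌈c⌉₊ * L) := by
    calc (n:ℝ) ^ c ≤ (n:ℝ) ^ (⌈c⌉₊ : ℝ) := by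
          apply Real.rpow_le_rpow_of_exponent_le
          · exact_mod_cast (by omega : 1 ≤ n)
          · exact Nat.le_ceil c
      _ = (n:ℝ) ^ ⌈c⌉₊ := Real.rpow_natCast _ _
      _ ≤ ((2:ℝ) ^ L) ^ ⌈c⌉₊ := by
          gcongr
          exact_mod_cast hnL
      _ = _ := by rw [← pow_mul, mul_comm]
  have hnpos : (0:ℝ) < n := by positivity
  have hncpos : (0:ℝ) < (n:ℝ) ^ c := Real.rpow_pos_of_pos hnpos c
  have hbad : (n:ℝ) ^ c * ((Ω.filter fun ω => ¬ P ω).card : ℝ) ≤ Ω.card := by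
    have h2b : (2:ℝ) ^ b = 2 ^ f * 2 ^ (⌈c⌉₊ * L) := by rw [hb, pow_add]
    rw [h2b, mul_assoc] at hmR
    have h5 := le_of_mul_le_mul_left hmR (by positivity)
    exact (mul_le_mul_of_nonneg_right hnc (by positivity)).trans h5
  rw [Real.rpow_neg hnpos.le, mul_one_div, le_div_iff₀ hposR, sub_mul, one_mul]
  have h6 : ((Ω.filter fun ω => ¬ P ω).card : ℝ) ≤ ((n:ℝ) ^ c)⁻¹ * Ω.card := by
    rw [inv_mul_eq_div, le_div_iff₀ hncpos]
    linarith
  linarith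
end
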